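/- Let F be a Minkowski norm on ℝⁿ, let Ω ⊆ ℝⁿ be an open set with smooth boundary such that Ω^c is bounded, let 1 < p < n, and let v_p be the positive C¹ weak solution of div(F(∇v)^{p−1} F_ξ(∇v)) = 0 in Ω with v_p = 1 on ∂Ω and v_p → 0 at infinity. Then F(∇v_p(x))/v_p(x) → 0 as |x| → +∞. -/

import Mathlib

open MeasureTheory Filter Topology Metric Set
open scoped RealInnerProductSpace NNReal

noncomputable section

abbrev En (n : ℕ) := EuclideanSpace ℝ (Fin n)

/-- A Minkowski norm on ℝⁿ: a norm (convex, even, 1-homogeneous, positive away from 0)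
which is smooth away from the origin and whose Hessian of `F²/2` is positive definite
on `ℝⁿ \ {0}`. -/
structure MinkowskiNorm (n : ℕ) where
  F : En n → ℝ
  convexOn : ConvexOn ℝ Set.univ F
  even : ∀ ξ, F (-ξ) = F ξ
  homog : ∀ c : ℝ, 0 ≤ c → ∀ ξ, F (c • ξ) = c * F ξ
  pos : ∀ ξ : En n, ξ ≠ 0 → 0 < F ξ
  smooth : ContDiffOn ℝ (⊤ : ℕ∞) F {(0 : En n)}ᶜ
  elliptic : ∀ ξ : En n, ξ ≠ 0 → ∀ v : En n, v ≠ 0 →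
    0 < fderiv ℝ (fun x => fderiv ℝ (fun y => F y ^ 2 / 2) x) ξ v v

/-- Locally Lipschitz on a set (i.e. `C^{0,1}_loc`). -/
def LocLipOn {n : ℕ} (f : En n → ℝ) (s : Set (En n)) : Prop :=
  ∀ x ∈ s, ∃ (K : ℝ≥0) (t : Set (En n)), t ∈ nhdsWithin x s ∧ LipschitzOnWith K f t

/-- Weak solution of `div(F_ξ(∇u)) = F(∇u)` in `Ω` in the sense of Huisken–Ilmanen's
minimization principle. -/
def IsWeakSolIAMCF {n : ℕ} (N : MinkowskiNorm n) (Ω : Set (En n)) (u : En n → ℝ) : Prop :=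
  LocLipOn u Ω ∧
  ∀ K : Set (En n), IsCompact (closure K) → closure K ⊆ Ω →
    ∀ φ : En n → ℝ, LocLipOn φ Ω → (∀ x ∈ Ω \ K, φ x = u x) →
      (∫ x in K, (N.F (gradient u x) + u x * N.F (gradient u x))) ≤
        ∫ x in K, (N.F (gradient φ x) + φ x * N.F (gradient u x))

/-- Weak subsolution: the minimization inequality holds for competitors `φ ≤ u`. -/
def IsWeakSubSolIAMCF {n : ℕ} (N : MinkowskiNorm n) (Ω : Set (En n)) (u : En n → ℝ) : Prop :=
  LocLipOn u Ω ∧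
  ∀ K : Set (En n), IsCompact (closure K) → closure K ⊆ Ω →
    ∀ φ : En n → ℝ, LocLipOn φ Ω → (∀ x ∈ Ω \ K, φ x = u x) → (∀ x ∈ Ω, φ x ≤ u x) →
      (∫ x in K, (N.F (gradient u x) + u x * N.F (gradient u x))) ≤
        ∫ x in K, (N.F (gradient φ x) + φ x * N.F (gradient u x))

/-- Weak supersolution: the minimization inequality holds for competitors `φ ≥ u`. -/
def IsWeakSuperSolIAMCF {n : ℕ} (N : MinkowskiNorm n) (Ω : Set (En n)) (u : En n → ℝ) : Prop :=
  LocLipOn u Ω ∧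
  ∀ K : Set (En n), IsCompact (closure K) → closure K ⊆ Ω →
    ∀ φ : En n → ℝ, LocLipOn φ Ω → (∀ x ∈ Ω \ K, φ x = u x) → (∀ x ∈ Ω, u x ≤ φ x) →
      (∫ x in K, (N.F (gradient u x) + u x * N.F (gradient u x))) ≤
        ∫ x in K, (N.F (gradient φ x) + φ x * N.F (gradient u x))

/-- A smooth compactly supported test function on `Ω`. -/
def IsTestFun {n : ℕ} (Ω : Set (En n)) (ψ : En n → ℝ) : Prop :=
  ContDiff ℝ (⊤ : ℕ∞) ψ ∧ HasCompactSupport ψ ∧ tsupport ψ ⊆ Ω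

/-- Weak solution of the Finsler `p`-Laplace equation `div(F(∇v)^{p-1} F_ξ(∇v)) = 0` in `Ω`. -/
def IsWeakPHarmonic {n : ℕ} (N : MinkowskiNorm n) (Ω : Set (En n)) (p : ℝ)
    (v : En n → ℝ) : Prop :=
  ∀ ψ : En n → ℝ, IsTestFun Ω ψ →
    (∫ x in Ω, N.F (gradient v x) ^ (p - 1) *
      ⟪gradient N.F (gradient v x), gradient ψ x⟫) = 0

/-- Weak solution of `div(F(∇u)^{p-1} F_ξ(∇u)) = F(∇u)^p` in `Ω`. -/
def IsWeakPSol {n : ℕ} (N : MinkowskiNorm n) (Ω : Set (En n)) (p : ℝ)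
    (u : En n → ℝ) : Prop :=
  ∀ ψ : En n → ℝ, IsTestFun Ω ψ →
    (∫ x in Ω, N.F (gradient u x) ^ (p - 1) *
      ⟪gradient N.F (gradient u x), gradient ψ x⟫) =
      - ∫ x in Ω, N.F (gradient u x) ^ p * ψ x

/-- The polar (dual) norm `F^o(x) = sup_{ξ ≠ 0} ⟨ξ, x⟩ / F(ξ)`. -/
def polarF {n : ℕ} (N : MinkowskiNorm n) (x : En n) : ℝ :=
  sSup {c : ℝ | ∃ ξ : En n, ξ ≠ 0 ∧ c = ⟪ξ, x⟫ / N.F ξ}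

/-- The Wulff shape of radius `r` centered at `x₀`: `{x : F^o(x - x₀) < r}`. -/
def Wulff {n : ℕ} (N : MinkowskiNorm n) (r : ℝ) (x₀ : En n) : Set (En n) :=
  {x | polarF N (x - x₀) < r}

/-- `Ω` is an open set with smooth boundary: it is a smooth sublevel set of a smooth
function with nonvanishing gradient on the boundary. -/
def HasSmoothBoundary {n : ℕ} (Ω : Set (En n)) : Prop :=
  ∃ f : En n → ℝ, ContDiff ℝ (⊤ : ℕ∞) f ∧ Ω = {x | f x < 0} ∧
    ∀ x ∈ frontier Ω, fderiv ℝ f x ≠ 0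

/-- `C¹` on `s` with locally Hölder continuous gradient (i.e. `C^{1,α}_loc`). -/
def C1LocHolderOn {n : ℕ} (v : En n → ℝ) (s : Set (En n)) : Prop :=
  ContDiffOn ℝ 1 v s ∧
  ∀ x ∈ s, ∃ (α C : ℝ≥0), 0 < α ∧ (α : ℝ) ≤ 1 ∧
    ∃ t ∈ nhdsWithin x s, HolderOnWith C α (fun y => gradient v y) t

/-- Divergence of a vector field on `ℝⁿ`. -/
def divg {n : ℕ} (V : En n → En n) (x : En n) : ℝ :=
  ∑ i : Fin n, fderiv ℝ V x (EuclideanSpace.single i 1) i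

/-!
Translates and positive multiples of solutions are solutions. Comparing `v (· + w)` with
`(1 + C‖w‖) v` in an exterior domain gives `‖∇v‖ ≤ C v`, and comparing `v` with multiples of the
fundamental solution `F°(x)^{-(n-p)/(p-1)}` gives a Harnack inequality at infinity. Hence the
rescaled functions `V = v (x + ·) / v x` are solutions on balls whose radius `R` tends to infinity
with `‖x‖`, and both `V` and `∇V` are bounded there independently of `x`. The gradient of such a
function is small at the centre. The Caccioppoli inequality bounds the volume of
`{‖∇V‖ ≥ κ} ∩ B_R` by `C R^{n-1}`. Where a difference quotient of `V` in the direction `e` exceeds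
`κ`, the gradients lie in a half-space `⟪e, ξ⟫ ≥ κ/2` away from the degeneracy of the equation, so
the difference quotient of the flux is uniformly elliptic. De Giorgi's iteration, applied to the
difference quotient lowered by `κ` and by the barrier `L‖x‖²/R²` which confines its positivity set
to `B_R`, then bounds the quotient by `2κ` at the centre, because the positivity set has density of
order `1/R`.
-/

section Gradient

variable {E : Type*} [NormedAddCommGroup E] [InnerProductSpace ℝ E]

theorem norm_le_of_forall_inner_le {y : E} {c : ℝ} (hc : 0 ≤ c)
    (h : ∀ e : E, ‖e‖ = 1 → ⟪y, e⟫ ≤ c) : ‖y‖ ≤ c := by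
  rcases eq_or_ne y 0 with rfl | hy
  · rwa [norm_zero]
  · have := h (‖y‖⁻¹ • y) (norm_smul_inv_norm hy)
    rwa [real_inner_smul_right, real_inner_self_eq_norm_sq, sq,
      inv_mul_cancel_left₀ (norm_ne_zero_iff.2 hy)] at this

theorem exists_inner_sub_eq_inner_fderiv {G : E → E} {x y : E}
    (hG : ∀ z ∈ segment ℝ x y, DifferentiableAt ℝ G z) :
    ∃ z ∈ segment ℝ x y, ⟪G y - G x, y - x⟫ = ⟪fderiv ℝ G z (y - x), y - x⟫ := by
  obtain ⟨z, hz, h⟩ := domain_mvt (f := fun z => ⟪y - x, G z⟫)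
    (f' := fun z => (innerSL ℝ (y - x)).comp (fderiv ℝ G z))
    (fun z hz => ((innerSL ℝ (y - x)).hasFDerivAt.comp z (hG z hz).hasFDerivAt).hasFDerivWithinAt)
    (convex_segment x y) (left_mem_segment ℝ x y) (right_mem_segment ℝ x y)
  refine ⟨z, hz, ?_⟩
  rw [real_inner_comm, inner_sub_right, h, real_inner_comm]
  rfl

variable [CompleteSpace E] {f g : E → ℝ} {x : E}

theorem gradient_eq_toDual_symm (f : E → ℝ) (x : E) :
    gradient f x = (InnerProductSpace.toDual ℝ E).symm (fderiv ℝ f x) := rfl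

theorem norm_gradient_sub_gradient (f g : E → ℝ) (x y : E) :
    ‖gradient f x - gradient g y‖ = ‖fderiv ℝ f x - fderiv ℝ g y‖ := by
  rw [gradient_eq_toDual_symm, gradient_eq_toDual_symm, ← map_sub, LinearIsometryEquiv.norm_map]

theorem norm_gradient (f : E → ℝ) (x : E) : ‖gradient f x‖ = ‖fderiv ℝ f x‖ :=
  (InnerProductSpace.toDual ℝ E).symm.norm_map _

theorem gradient_eq_of_hasFDerivAt {y : E} {f' : StrongDual ℝ E} (hf : HasFDerivAt f f' x)
    (h : ∀ w, f' w = ⟪y, w⟫) : gradient f x = y :=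
  ext_inner_right ℝ fun w => by rw [inner_gradient_left, hf.fderiv, h]

theorem contDiffAt_gradient {k m : WithTop ℕ∞} (hf : ContDiffAt ℝ k f x) (hm : m + 1 ≤ k) :
    ContDiffAt ℝ m (gradient f) x :=
  (InnerProductSpace.toDual ℝ E).symm.toContinuousLinearEquiv.contDiff.contDiffAt.comp x
    (hf.fderiv_right hm)

theorem continuous_gradient (hf : ContDiff ℝ 1 f) : Continuous (gradient f) :=
  (InnerProductSpace.toDual ℝ E).symm.continuous.comp (hf.continuous_fderiv one_ne_zero)

theorem continuousOn_gradient {U : Set E} (hf : ContDiffOn ℝ 1 f U) (hU : IsOpen U) :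
    ContinuousOn (gradient f) U :=
  (InnerProductSpace.toDual ℝ E).symm.continuous.comp_continuousOn
    (hf.continuousOn_fderiv_of_isOpen hU le_rfl)

theorem gradient_comp_smul (f : E → ℝ) (c : ℝ) (x : E) :
    gradient (fun y => f (c • y)) x = c • gradient f (c • x) := by
  simp only [gradient_eq_toDual_symm, fderiv_comp_smul, map_smulₛₗ, conj_trivial]

theorem gradient_const_mul (f : E → ℝ) (c : ℝ) (x : E) :
    gradient (fun y => c * f y) x = c • gradient f x := by
  have h : fderiv ℝ (fun y => c * f y) x = c • fderiv ℝ f x :=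
    congrFun (fderiv_const_smul_field (f := f) c) x
  simp only [gradient_eq_toDual_symm, h, map_smulₛₗ, conj_trivial]

theorem gradient_comp_add_right (f : E → ℝ) (a x : E) :
    gradient (fun y => f (y + a)) x = gradient f (x + a) := by
  simp only [gradient_eq_toDual_symm, fderiv_comp_add_right]

theorem gradient_add_const (f : E → ℝ) (c : ℝ) (x : E) :
    gradient (fun y => f y + c) x = gradient f x := by
  simp only [gradient_eq_toDual_symm, fderiv_add_const]

theorem gradient_sub (hf : DifferentiableAt ℝ f x) (hg : DifferentiableAt ℝ g x) :
    gradient (fun y => f y - g y) x = gradient f x - gradient g x := by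
  simp only [gradient_eq_toDual_symm, fderiv_fun_sub hf hg, map_sub]

theorem gradient_mul (hf : DifferentiableAt ℝ f x) (hg : DifferentiableAt ℝ g x) :
    gradient (fun y => f y * g y) x = f x • gradient g x + g x • gradient f x :=
  gradient_eq_of_hasFDerivAt (hf.hasFDerivAt.mul hg.hasFDerivAt) fun w => by
    simp [inner_add_left, real_inner_smul_left, inner_gradient_left]

theorem gradient_comp_of_hasDerivAt {φ : ℝ → ℝ} {φ' : ℝ} (hφ : HasDerivAt φ φ' (f x))
    (hf : DifferentiableAt ℝ f x) : gradient (fun y => φ (f y)) x = φ' • gradient f x :=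
  gradient_eq_of_hasFDerivAt (hφ.comp_hasFDerivAt x hf.hasFDerivAt) fun w => by
    simp [real_inner_smul_left, inner_gradient_left]

theorem inner_fderiv_gradient (hf : ContDiffAt ℝ 2 f x) (w u : E) :
    ⟪fderiv ℝ (gradient f) x w, u⟫ = fderiv ℝ (fderiv ℝ f) x w u := by
  have hd : DifferentiableAt ℝ (fderiv ℝ f) x :=
    (hf.fderiv_right (m := 1) one_add_one_eq_two.le).differentiableAt one_ne_zero
  have hg : DifferentiableAt ℝ (gradient f) x :=
    (contDiffAt_gradient (m := 1) hf one_add_one_eq_two.le).differentiableAt one_ne_zero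
  have h : fderiv ℝ (fun y => ⟪gradient f y, u⟫) x w = fderiv ℝ (fun y => fderiv ℝ f y u) x w := by
    simp only [inner_gradient_left]
  rw [fderiv_inner_apply ℝ hg (differentiableAt_const u),
    fderiv_clm_apply hd (differentiableAt_const u)] at h
  simpa using h

theorem inner_fderiv_gradient_comm (hf : ContDiffAt ℝ 2 f x) (w u : E) :
    ⟪fderiv ℝ (gradient f) x w, u⟫ = ⟪fderiv ℝ (gradient f) x u, w⟫ := by
  rw [inner_fderiv_gradient hf, inner_fderiv_gradient hf]
  exact hf.isSymmSndFDerivAt (by simp) w u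

theorem gradient_eq_zero_of_notMem_tsupport (hx : x ∉ tsupport f) : gradient f x = 0 := by
  rw [gradient_eq_toDual_symm, fderiv_of_notMem_tsupport ℝ hx, map_zero]

theorem inner_gradient_le_of_eventually_slope_le {w : E} {c : ℝ} (hf : DifferentiableAt ℝ f x)
    (h : ∀ᶠ s : ℝ in 𝓝[>] 0, (f (x + s • w) - f x) / s ≤ c) : ⟪gradient f x, w⟫ ≤ c := by
  have hderiv : HasDerivAt (fun s : ℝ => f (x + s • w)) (fderiv ℝ f x w) 0 :=
    hf.hasFDerivAt.hasLineDerivAt w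
  have hslope := hderiv.hasDerivWithinAt (s := Ioi 0)
  rw [hasDerivWithinAt_iff_tendsto_slope' self_notMem_Ioi] at hslope
  rw [inner_gradient_left]
  refine le_of_tendsto hslope ?_
  filter_upwards [h] with s hs
  simpa [slope_def_field] using hs

theorem abs_sub_le_of_norm_gradient_le {s : Set E} (hs : Convex ℝ s) {L : ℝ}
    (hd : ∀ x ∈ s, DifferentiableAt ℝ f x) (hL : ∀ x ∈ s, ‖gradient f x‖ ≤ L) {x y : E}
    (hx : x ∈ s) (hy : y ∈ s) : |f y - f x| ≤ L * ‖y - x‖ :=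
  hs.norm_image_sub_le_of_norm_fderiv_le hd (fun z hz => norm_gradient f z ▸ hL z hz) hx hy

theorem eq_zero_of_gradient_eq_zero [Nontrivial E] (hf : ContDiff ℝ 1 f)
    (hc : HasCompactSupport f) (h : ∀ x, gradient f x = 0) : f = 0 := by
  have : NoncompactSpace E := NormedSpace.noncompactSpace ℝ E
  have hconst : ∀ x y, f x = f y := is_const_of_fderiv_eq_zero (hf.differentiable one_ne_zero)
    fun z => by rw [← norm_eq_zero, ← norm_gradient, h, norm_zero]
  obtain ⟨y, hy⟩ : ∃ y, y ∉ tsupport f :=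
    (ne_univ_iff_exists_notMem _).1 hc.isCompact.ne_univ
  exact funext fun x => (hconst x y).trans (image_eq_zero_of_notMem_tsupport hy)

end Gradient

section PositivelyHomogeneous

variable {E : Type*} [NormedAddCommGroup E] [NormedSpace ℝ E]

theorem fderiv_apply_self_of_homogeneous {G : Type*} [NormedAddCommGroup G] [NormedSpace ℝ G]
    {f : E → G} (hf : ∀ c : ℝ, 0 < c → ∀ y, f (c • y) = c • f y) {x : E}
    (hd : DifferentiableAt ℝ f x) : fderiv ℝ f x x = f x := by
  have hray : HasDerivAt (fun t : ℝ => f (t • x)) (fderiv ℝ f x x) 1 := by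
    have hfd : HasFDerivAt f (fderiv ℝ f x) ((1 : ℝ) • x) := by
      rw [one_smul]; exact hd.hasFDerivAt
    simpa [Function.comp_def] using
      hfd.comp_hasDerivAt (1 : ℝ) ((hasDerivAt_id (1 : ℝ)).smul_const x)
  have hlin : HasDerivAt (fun t : ℝ => t • f x) (f x) 1 := by
    simpa using (hasDerivAt_id (1 : ℝ)).smul_const (f x)
  refine hray.unique (hlin.congr_of_eventuallyEq ?_)
  filter_upwards [lt_mem_nhds (zero_lt_one' ℝ)] with t ht using hf t ht x

theorem exists_norm_equiv_of_homogeneous [ProperSpace E] {f : E → ℝ}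
    (hf : ∀ c : ℝ, 0 < c → ∀ y, f (c • y) = c • f y)
    (hcont : ContinuousOn f {0}ᶜ) (hpos : ∀ x, x ≠ 0 → 0 < f x) :
    ∃ c C : ℝ, 0 < c ∧ 0 < C ∧ ∀ x, c * ‖x‖ ≤ f x ∧ f x ≤ C * ‖x‖ := by
  have hsphere : ∀ x ∈ sphere (0 : E) 1, x ≠ 0 := fun x hx => ne_zero_of_mem_unit_sphere ⟨x, hx⟩
  have hcomp := isCompact_sphere (0 : E) 1
  have hcontS := hcont.mono hsphere
  obtain ⟨C, hC⟩ := hcomp.exists_bound_of_continuousOn hcontS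
  obtain ⟨c, hc, hcle⟩ := hcomp.exists_forall_le' hcontS fun x hx => hpos x (hsphere x hx)
  have hf0 : f 0 = 0 := by
    have := hf 2 two_pos 0
    rw [smul_zero, smul_eq_mul] at this
    linarith
  refine ⟨c, max C 1, hc, by positivity, fun x => ?_⟩
  rcases eq_or_ne x 0 with rfl | hx
  · simp [hf0]
  have hmem : ‖x‖⁻¹ • x ∈ sphere (0 : E) 1 := by simp [norm_smul, hx]
  have heq : f x = ‖x‖ * f (‖x‖⁻¹ • x) := by
    rw [hf _ (inv_pos.2 (norm_pos_iff.2 hx)), smul_eq_mul,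
      mul_inv_cancel_left₀ (norm_ne_zero_iff.2 hx)]
  rw [heq, mul_comm c, mul_comm (max C 1)]
  constructor <;> gcongr
  · exact hcle _ hmem
  · exact (le_abs_self _).trans ((hC _ hmem).trans (le_max_left _ _))

end PositivelyHomogeneous

namespace MinkowskiNorm

variable {n : ℕ} (N : MinkowskiNorm n) {p : ℝ} {ξ η : En n}

theorem map_zero : N.F 0 = 0 := by
  simpa using N.homog 0 le_rfl 0

theorem nonneg (ξ : En n) : 0 ≤ N.F ξ := by
  rcases eq_or_ne ξ 0 with rfl | h
  · exact N.map_zero.ge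
  · exact (N.pos ξ h).le

theorem continuous : Continuous N.F := N.convexOn.locallyLipschitz.continuous

theorem contDiffAt {k : WithTop ℕ∞} (hk : k ≤ (⊤ : ℕ∞)) (h : ξ ≠ 0) : ContDiffAt ℝ k N.F ξ :=
  (N.smooth.contDiffAt (isOpen_compl_singleton.mem_nhds h)).of_le hk

theorem differentiableAt (h : ξ ≠ 0) : DifferentiableAt ℝ N.F ξ :=
  (N.contDiffAt le_rfl h).differentiableAt (by simp)

theorem exists_norm_equiv :
    ∃ c C : ℝ, 0 < c ∧ 0 < C ∧ ∀ ξ, c * ‖ξ‖ ≤ N.F ξ ∧ N.F ξ ≤ C * ‖ξ‖ :=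
  exists_norm_equiv_of_homogeneous (fun c hc => N.homog c hc.le) N.continuous.continuousOn N.pos

theorem gradient_smul {c : ℝ} (hc : 0 < c) (ξ : En n) :
    gradient N.F (c • ξ) = gradient N.F ξ := by
  have h := gradient_comp_smul N.F c ξ
  simp only [N.homog c hc.le, gradient_const_mul] at h
  exact (smul_right_injective _ hc.ne' h).symm

theorem inner_gradient_self (h : ξ ≠ 0) : ⟪gradient N.F ξ, ξ⟫ = N.F ξ := by
  rw [inner_gradient_left]
  exact fderiv_apply_self_of_homogeneous (fun c hc => N.homog c hc.le) (N.differentiableAt h)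

/-- The flux `F^{p-1} F_ξ` of the anisotropic `p`-Laplace equation. -/
def flux (p : ℝ) (ξ : En n) : En n := N.F ξ ^ (p - 1) • gradient N.F ξ

/-- The duality map `F F_ξ`, i.e. the gradient of `F² / 2`. -/
def dualMap (ξ : En n) : En n := N.F ξ • gradient N.F ξ

theorem flux_zero (hp : 1 < p) : N.flux p 0 = 0 := by
  simp [flux, N.map_zero, Real.zero_rpow (sub_pos.2 hp).ne']

theorem flux_eq_rpow_smul_dualMap (p : ℝ) (h : ξ ≠ 0) :
    N.flux p ξ = N.F ξ ^ (p - 2) • N.dualMap ξ := by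
  rw [flux, dualMap, smul_smul, ← Real.rpow_add_one (N.pos ξ h).ne']
  ring_nf

theorem inner_flux_self (hp : 1 < p) (ξ : En n) : ⟪N.flux p ξ, ξ⟫ = N.F ξ ^ p := by
  rcases eq_or_ne ξ 0 with rfl | h
  · rw [inner_zero_right, N.map_zero, Real.zero_rpow (by linarith)]
  · rw [flux, real_inner_smul_left, N.inner_gradient_self h,
      ← Real.rpow_add_one (N.pos ξ h).ne', sub_add_cancel]

theorem flux_smul {c : ℝ} (hc : 0 < c) (ξ : En n) :
    N.flux p (c • ξ) = c ^ (p - 1) • N.flux p ξ := by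
  rw [flux, flux, N.gradient_smul hc, N.homog c hc.le, Real.mul_rpow hc.le (N.nonneg ξ), smul_smul]

theorem dualMap_smul {c : ℝ} (hc : 0 < c) (ξ : En n) : N.dualMap (c • ξ) = c • N.dualMap ξ := by
  rw [dualMap, N.gradient_smul hc, N.homog c hc.le, dualMap, smul_smul]

theorem contDiffAt_gradient (h : ξ ≠ 0) : ContDiffAt ℝ 1 (gradient N.F) ξ :=
  _root_.contDiffAt_gradient (N.contDiffAt ENat.LEInfty.out h) one_add_one_eq_two.le

theorem contDiffAt_dualMap (h : ξ ≠ 0) : ContDiffAt ℝ 1 N.dualMap ξ :=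
  (N.contDiffAt (by simp) h).smul (N.contDiffAt_gradient h)

theorem contDiffAt_flux (p : ℝ) (h : ξ ≠ 0) : ContDiffAt ℝ 1 (N.flux p) ξ :=
  ((N.contDiffAt (by simp) h).rpow_const_of_ne (N.pos ξ h).ne').smul (N.contDiffAt_gradient h)

theorem differentiableAt_dualMap (h : ξ ≠ 0) : DifferentiableAt ℝ N.dualMap ξ :=
  (N.contDiffAt_dualMap h).differentiableAt one_ne_zero

theorem differentiableAt_flux (p : ℝ) (h : ξ ≠ 0) : DifferentiableAt ℝ (N.flux p) ξ :=
  (N.contDiffAt_flux p h).differentiableAt one_ne_zero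

theorem continuous_flux (hp : 1 < p) : Continuous (N.flux p) := by
  refine continuous_iff_continuousAt.2 fun ξ => ?_
  rcases eq_or_ne ξ 0 with rfl | h
  · obtain ⟨K, t, ht, hK⟩ := N.convexOn.locallyLipschitz 0
    have hbound : ∀ᶠ ξ in 𝓝 (0 : En n), ‖N.flux p ξ‖ ≤ N.F ξ ^ (p - 1) * K := by
      filter_upwards [eventually_mem_nhds_iff.2 ht] with ξ hξ
      rw [flux, norm_smul, norm_gradient, Real.norm_of_nonneg (Real.rpow_nonneg (N.nonneg _) _)]
      exact mul_le_mul_of_nonneg_left (norm_fderiv_le_of_lipschitzOn ℝ hξ hK)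
        (Real.rpow_nonneg (N.nonneg _) _)
    have hlim : Tendsto (fun ξ => N.F ξ ^ (p - 1) * K) (𝓝 0) (𝓝 0) := by
      have hcont : Continuous fun ξ => N.F ξ ^ (p - 1) * K :=
        (N.continuous.rpow_const fun _ => Or.inr (by linarith)).mul_const _
      simpa [N.map_zero, Real.zero_rpow (sub_pos.2 hp).ne'] using hcont.tendsto 0
    rw [ContinuousAt, N.flux_zero hp]
    exact squeeze_zero_norm' hbound hlim
  · exact (N.contDiffAt_flux p h).continuousAt

theorem gradient_half_sq (h : ξ ≠ 0) : gradient (fun y => N.F y ^ 2 / 2) ξ = N.dualMap ξ := by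
  have hsq : HasDerivAt (fun t : ℝ => t ^ 2 / 2) (N.F ξ) (N.F ξ) := by
    simpa using (hasDerivAt_pow 2 (N.F ξ)).div_const 2
  exact gradient_comp_of_hasDerivAt hsq (N.differentiableAt h)

theorem fderiv_dualMap (h : ξ ≠ 0) :
    fderiv ℝ N.dualMap ξ = fderiv ℝ (gradient fun y => N.F y ^ 2 / 2) ξ := by
  refine EventuallyEq.fderiv_eq ?_
  filter_upwards [isOpen_compl_singleton.mem_nhds h] with x hx using (N.gradient_half_sq hx).symm

theorem contDiffAt_half_sq (h : ξ ≠ 0) : ContDiffAt ℝ 2 (fun y => N.F y ^ 2 / 2) ξ :=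
  ((N.contDiffAt ENat.LEInfty.out h).pow 2).div_const 2

theorem inner_fderiv_dualMap_comm (h : ξ ≠ 0) (w u : En n) :
    ⟪fderiv ℝ N.dualMap ξ w, u⟫ = ⟪fderiv ℝ N.dualMap ξ u, w⟫ := by
  rw [N.fderiv_dualMap h]
  exact inner_fderiv_gradient_comm (N.contDiffAt_half_sq h) w u

theorem inner_fderiv_dualMap_pos (h : ξ ≠ 0) {w : En n} (hw : w ≠ 0) :
    0 < ⟪fderiv ℝ N.dualMap ξ w, w⟫ := by
  rw [N.fderiv_dualMap h, inner_fderiv_gradient (N.contDiffAt_half_sq h)]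
  exact N.elliptic ξ h w hw

theorem fderiv_dualMap_self (h : ξ ≠ 0) : fderiv ℝ N.dualMap ξ ξ = N.dualMap ξ :=
  fderiv_apply_self_of_homogeneous (fun _ hc => N.dualMap_smul hc) (N.differentiableAt_dualMap h)

/-- Cauchy–Schwarz for the inner product `D(F F_ξ)`, since `D(F F_ξ) ξ = F F_ξ`. -/
theorem sq_inner_gradient_le (h : ξ ≠ 0) (w : En n) :
    ⟪gradient N.F ξ, w⟫ ^ 2 ≤ ⟪fderiv ℝ N.dualMap ξ w, w⟫ := by
  have hF := N.pos ξ h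
  set d := ⟪gradient N.F ξ, w⟫
  have hw : ⟪N.dualMap ξ, w⟫ = N.F ξ * d := real_inner_smul_left ..
  have hξ : ⟪N.dualMap ξ, ξ⟫ = N.F ξ * N.F ξ := by
    rw [dualMap, real_inner_smul_left, N.inner_gradient_self h]
  have hwξ : ⟪fderiv ℝ N.dualMap ξ w, ξ⟫ = N.F ξ * d := by
    rw [N.inner_fderiv_dualMap_comm h, N.fderiv_dualMap_self h, hw]
  have hnonneg : 0 ≤ ⟪fderiv ℝ N.dualMap ξ (w - (d / N.F ξ) • ξ), w - (d / N.F ξ) • ξ⟫ := by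
    rcases eq_or_ne (w - (d / N.F ξ) • ξ) 0 with h0 | h0
    · simp [h0]
    · exact (N.inner_fderiv_dualMap_pos h h0).le
  have hexpand : ⟪fderiv ℝ N.dualMap ξ (w - (d / N.F ξ) • ξ), w - (d / N.F ξ) • ξ⟫ =
      ⟪fderiv ℝ N.dualMap ξ w, w⟫ - d ^ 2 := by
    simp only [map_sub, map_smul, N.fderiv_dualMap_self h, inner_sub_left, inner_sub_right,
      real_inner_smul_left, real_inner_smul_right, hw, hξ, hwξ]
    field_simp
    ring
  linarith

theorem inner_fderiv_flux_self (p : ℝ) (h : ξ ≠ 0) (w : En n) :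
    ⟪fderiv ℝ (N.flux p) ξ w, w⟫ = N.F ξ ^ (p - 2) *
      (⟪fderiv ℝ N.dualMap ξ w, w⟫ + (p - 2) * ⟪gradient N.F ξ, w⟫ ^ 2) := by
  have hF := N.pos ξ h
  have heq : N.flux p =ᶠ[𝓝 ξ] fun x => N.F x ^ (p - 2) • N.dualMap x := by
    filter_upwards [isOpen_compl_singleton.mem_nhds h] with x hx
      using N.flux_eq_rpow_smul_dualMap p hx
  have hderiv : HasFDerivAt (fun x => N.F x ^ (p - 2) • N.dualMap x) _ ξ :=
    ((N.differentiableAt h).hasFDerivAt.rpow_const (p := p - 2) (Or.inl hF.ne')).smul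
      (N.differentiableAt_dualMap h).hasFDerivAt
  have hpow : N.F ξ ^ (p - 2 - 1) * N.F ξ = N.F ξ ^ (p - 2) := by
    rw [← Real.rpow_add_one hF.ne', sub_add_cancel]
  rw [heq.fderiv_eq, hderiv.fderiv]
  simp only [_root_.add_apply, _root_.smul_apply, ContinuousLinearMap.smulRight_apply,
    inner_add_left, real_inner_smul_left, dualMap, smul_eq_mul, ← inner_gradient_left]
  rw [← hpow]
  ring

theorem inner_fderiv_flux_pos (hp : 1 < p) (h : ξ ≠ 0) {w : En n} (hw : w ≠ 0) :
    0 < ⟪fderiv ℝ (N.flux p) ξ w, w⟫ := by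
  rw [N.inner_fderiv_flux_self p h]
  refine mul_pos (Real.rpow_pos_of_pos (N.pos ξ h) _) ?_
  have hpos := N.inner_fderiv_dualMap_pos h hw
  have hCS := N.sq_inner_gradient_le h w
  rcases eq_or_ne ⟪gradient N.F ξ, w⟫ 0 with h0 | h0
  · simpa [h0] using hpos
  · have : 0 < ⟪gradient N.F ξ, w⟫ ^ 2 := by positivity
    nlinarith

theorem continuousOn_fderiv_flux (p : ℝ) : ContinuousOn (fderiv ℝ (N.flux p)) {0}ᶜ := fun _ h =>
  ((N.contDiffAt_flux p h).fderiv_right (m := 0)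
    (zero_add 1).le).continuousAt.continuousWithinAt

theorem exists_le_inner_fderiv_flux (hp : 1 < p) {r R : ℝ} (hr : 0 < r) :
    ∃ c : ℝ, 0 < c ∧ ∀ ξ : En n, r ≤ ‖ξ‖ → ‖ξ‖ ≤ R →
      ∀ w, c * ‖w‖ ^ 2 ≤ ⟪fderiv ℝ (N.flux p) ξ w, w⟫ := by
  have hne : ∀ ξ ∈ closedBall (0 : En n) R \ ball 0 r, ξ ≠ 0 := by
    rintro ξ hξ rfl
    exact hξ.2 (mem_ball_self hr)
  have hcont : ContinuousOn (fun q : En n × En n => ⟪fderiv ℝ (N.flux p) q.1 q.2, q.2⟫)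
      ((closedBall 0 R \ ball 0 r) ×ˢ sphere (0 : En n) 1) :=
    (((N.continuousOn_fderiv_flux p).comp continuousOn_fst fun q hq => hne _ hq.1).clm_apply
      continuousOn_snd).inner continuousOn_snd
  obtain ⟨c, hc, hle⟩ := (((isCompact_closedBall (0 : En n) R).diff isOpen_ball).prod
    (isCompact_sphere (0 : En n) 1)).exists_forall_le' hcont fun q hq =>
      N.inner_fderiv_flux_pos hp (hne _ hq.1) (ne_zero_of_mem_unit_sphere ⟨q.2, hq.2⟩)
  refine ⟨c, hc, fun ξ h₁ h₂ w => ?_⟩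
  rcases eq_or_ne w 0 with rfl | hw
  · simp
  have h := hle (ξ, ‖w‖⁻¹ • w) ⟨by simpa using ⟨h₂, h₁⟩, by simp [norm_smul, hw]⟩
  simp only [map_smul, real_inner_smul_left, real_inner_smul_right] at h
  rwa [← mul_assoc, ← mul_inv, inv_mul_eq_div,
    le_div_iff₀ (mul_self_pos.2 (norm_ne_zero_iff.2 hw)), ← sq] at h

theorem exists_norm_fderiv_flux_le (p : ℝ) {r R : ℝ} (hr : 0 < r) :
    ∃ C : ℝ, 0 < C ∧ ∀ ξ : En n, r ≤ ‖ξ‖ → ‖ξ‖ ≤ R → ‖fderiv ℝ (N.flux p) ξ‖ ≤ C := by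
  obtain ⟨C, hC⟩ := ((isCompact_closedBall (0 : En n) R).diff
    (isOpen_ball (x := 0) (ε := r))).exists_bound_of_continuousOn
      ((N.continuousOn_fderiv_flux p).mono fun ξ hξ h0 => hξ.2 (by
        rw [mem_singleton_iff.1 h0]; exact mem_ball_self hr))
  refine ⟨max C 1, by positivity, fun ξ h₁ h₂ => (hC ξ ?_).trans (le_max_left _ _)⟩
  simpa using ⟨h₂, h₁⟩

theorem inner_flux_nonpos_of_add_eq_zero (hp : 1 < p) {a b : ℝ} (ha : 0 ≤ a) (hb : 0 ≤ b)
    (hab : a + b = 1) (h : a • η + b • ξ = 0) : ⟪N.flux p ξ, η⟫ ≤ 0 := by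
  rcases ha.eq_or_lt with rfl | ha
  · obtain rfl : b = 1 := by linarith
    rw [zero_smul, one_smul, zero_add] at h
    rw [h, N.flux_zero hp, inner_zero_left]
  · have hinner : a * ⟪N.flux p ξ, η⟫ + b * N.F ξ ^ p = 0 := by
      rw [← N.inner_flux_self hp, ← real_inner_smul_right, ← real_inner_smul_right,
        ← inner_add_right, h, inner_zero_right]
    have : 0 ≤ b * N.F ξ ^ p := mul_nonneg hb (Real.rpow_nonneg (N.nonneg ξ) p)
    nlinarith

theorem inner_flux_sub_pos (hp : 1 < p) (hne : ξ ≠ η) :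
    0 < ⟪N.flux p ξ - N.flux p η, ξ - η⟫ := by
  by_cases h : (0 : En n) ∈ segment ℝ η ξ
  · obtain ⟨a, b, ha, hb, hab, h0⟩ := h
    have hξη := N.inner_flux_nonpos_of_add_eq_zero hp ha hb hab h0
    have hηξ := N.inner_flux_nonpos_of_add_eq_zero hp hb ha (add_comm b a ▸ hab)
      (add_comm (a • η) (b • ξ) ▸ h0)
    have hsum : 0 < N.F ξ ^ p + N.F η ^ p := by
      have hξ := Real.rpow_nonneg (N.nonneg ξ) p
      have hη := Real.rpow_nonneg (N.nonneg η) p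
      rcases eq_or_ne ξ 0 with rfl | hξ0
      · linarith [Real.rpow_pos_of_pos (N.pos η hne.symm) p]
      · linarith [Real.rpow_pos_of_pos (N.pos ξ hξ0) p]
    simp only [inner_sub_left, inner_sub_right, N.inner_flux_self hp]
    linarith
  · have hne0 : ∀ ζ ∈ segment ℝ η ξ, ζ ≠ 0 := fun ζ hζ h0 => h (h0 ▸ hζ)
    obtain ⟨ζ, hζ, heq⟩ := exists_inner_sub_eq_inner_fderiv fun ζ hζ =>
      N.differentiableAt_flux p (hne0 ζ hζ)
    rw [heq]
    exact N.inner_fderiv_flux_pos hp (hne0 ζ hζ) (sub_ne_zero.2 hne)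

theorem inner_flux_sub_nonneg (hp : 1 < p) (ξ η : En n) :
    0 ≤ ⟪N.flux p ξ - N.flux p η, ξ - η⟫ := by
  rcases eq_or_ne ξ η with rfl | h
  · simp
  · exact (N.inner_flux_sub_pos hp h).le

/-- Uniform ellipticity of the flux on half balls that avoid the origin: the half-space keeps the
segment between `ξ` and `η` away from the origin. -/
theorem exists_flux_bounds (hp : 1 < p) {r R : ℝ} (hr : 0 < r) :
    ∃ c C : ℝ, 0 < c ∧ 0 < C ∧ ∀ e ξ η : En n, ‖e‖ = 1 → r ≤ ⟪e, ξ⟫ → r ≤ ⟪e, η⟫ →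
      ‖ξ‖ ≤ R → ‖η‖ ≤ R →
      c * ‖ξ - η‖ ^ 2 ≤ ⟪N.flux p ξ - N.flux p η, ξ - η⟫ ∧
        ‖N.flux p ξ - N.flux p η‖ ≤ C * ‖ξ - η‖ := by
  obtain ⟨c, hc, hlower⟩ := N.exists_le_inner_fderiv_flux hp (R := R) hr
  obtain ⟨C, hC, hupper⟩ := N.exists_norm_fderiv_flux_le p (R := R) hr
  refine ⟨c, C, hc, hC, fun e ξ η he hξ hη hξR hηR => ?_⟩
  set D : Set (En n) := {ζ | r ≤ ⟪e, ζ⟫} ∩ closedBall 0 R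
  have hconvex : Convex ℝ D :=
    (convex_halfSpace_ge (innerSL ℝ e).isLinear r).inter (convex_closedBall _ _)
  have hDr : ∀ ζ ∈ D, r ≤ ‖ζ‖ := fun ζ hζ => by
    have : r ≤ ⟪e, ζ⟫ := hζ.1
    simpa [he] using this.trans (real_inner_le_norm e ζ)
  have hDR : ∀ ζ ∈ D, ‖ζ‖ ≤ R := fun ζ hζ => mem_closedBall_zero_iff.1 hζ.2
  have hD0 : ∀ ζ ∈ D, ζ ≠ 0 := fun ζ hζ => norm_pos_iff.1 (hr.trans_le (hDr ζ hζ))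
  have hξD : ξ ∈ D := ⟨hξ, mem_closedBall_zero_iff.2 hξR⟩
  have hηD : η ∈ D := ⟨hη, mem_closedBall_zero_iff.2 hηR⟩
  have hseg : segment ℝ η ξ ⊆ D := hconvex.segment_subset hηD hξD
  constructor
  · obtain ⟨ζ, hζ, heq⟩ := exists_inner_sub_eq_inner_fderiv fun ζ hζ =>
      N.differentiableAt_flux p (hD0 ζ (hseg hζ))
    rw [heq]
    exact hlower ζ (hDr ζ (hseg hζ)) (hDR ζ (hseg hζ)) _
  · exact hconvex.norm_image_sub_le_of_norm_fderiv_le (𝕜 := ℝ)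
      (fun ζ hζ => N.differentiableAt_flux p (hD0 ζ hζ))
      (fun ζ hζ => hupper ζ (hDr ζ hζ) (hDR ζ hζ)) hηD hξD

end MinkowskiNorm

section WeaklyDivFree

variable {n : ℕ} {X Y : En n → En n} {U V K : Set (En n)} {ψ g : En n → ℝ}

theorem exists_contDiff_norm_gradient_sub_le (hψ : ContDiff ℝ 1 ψ) (hc : HasCompactSupport ψ)
    {ε δ : ℝ} (hε : 0 < ε) (hδ : 0 < δ) :
    ∃ φ : En n → ℝ, ContDiff ℝ (⊤ : ℕ∞) φ ∧ tsupport φ ⊆ cthickening δ (tsupport ψ) ∧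
      ∀ x, ‖gradient ψ x - gradient φ x‖ ≤ ε := by
  have hcont : Continuous (fderiv ℝ ψ) := hψ.continuous_fderiv one_ne_zero
  obtain ⟨d, hd, hunif⟩ := Metric.uniformContinuous_iff.1
    (hcont.uniformContinuous_of_tendsto_cocompact (hc.fderiv ℝ).is_zero_at_infty) ε hε
  have hr : 0 < min d δ := lt_min hd hδ
  let b : ContDiffBump (0 : En n) := ⟨min d δ / 2, min d δ, half_pos hr, half_lt_self hr⟩
  refine ⟨convolution (b.normed volume) ψ (ContinuousLinearMap.lsmul ℝ ℝ) volume, ?_, ?_,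
    fun x => ?_⟩
  · exact b.hasCompactSupport_normed.contDiff_convolution_left _ b.contDiff_normed
      hψ.continuous.locallyIntegrable
  · refine closure_minimal ((support_convolution_subset _).trans ?_) isClosed_cthickening
    rintro _ ⟨x, hx, y, hy, rfl⟩
    rw [b.support_normed_eq, mem_ball_zero_iff] at hx
    refine mem_cthickening_of_dist_le _ y δ _ (subset_tsupport _ hy) ?_
    simpa only [dist_eq_norm, add_sub_cancel_right] using hx.le.trans (min_le_right d δ)
  · have hprecomp : (ContinuousLinearMap.lsmul ℝ ℝ).precompR (En n) =
        (ContinuousLinearMap.lsmul ℝ ℝ : ℝ →L[ℝ] (En n →L[ℝ] ℝ) →L[ℝ] (En n →L[ℝ] ℝ)) := by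
      ext; simp
    rw [norm_gradient_sub_gradient, (hc.hasFDerivAt_convolution_right _
      b.continuous_normed.locallyIntegrable hψ x).fderiv, hprecomp, ← dist_eq_norm, dist_comm]
    exact b.dist_normed_convolution_le hcont.aestronglyMeasurable fun y hy =>
      (hunif (hy.trans_le (min_le_left d δ))).le

/-- The equation `div X = 0` in `U` in the sense of distributions. The test functions are only
required to be `C¹`, as they will be built from `C¹` solutions. -/
def IsWeaklyDivFreeOn (X : En n → En n) (U : Set (En n)) : Prop :=
  ∀ ψ : En n → ℝ, ContDiff ℝ 1 ψ → HasCompactSupport ψ → tsupport ψ ⊆ U →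
    ∫ x, ⟪X x, gradient ψ x⟫ = 0

theorem continuous_inner_gradient (hU : IsOpen U) (hX : ContinuousOn X U) (hψ : ContDiff ℝ 1 ψ)
    (hs : tsupport ψ ⊆ U) : Continuous fun x => ⟪X x, gradient ψ x⟫ := by
  rw [continuous_iff_continuousAt]
  intro x
  by_cases hx : x ∈ tsupport ψ
  · exact (hX.continuousAt (hU.mem_nhds (hs hx))).inner (continuous_gradient hψ).continuousAt
  · refine continuousAt_const.congr (f := fun _ => (0 : ℝ)) ?_
    filter_upwards [(isClosed_tsupport ψ).isOpen_compl.mem_nhds hx] with y hy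
    rw [gradient_eq_zero_of_notMem_tsupport hy, inner_zero_right]

theorem integrable_gradient (hψ : ContDiff ℝ 1 ψ) (hc : HasCompactSupport ψ) :
    Integrable (gradient ψ) :=
  (continuous_gradient hψ).integrable_of_hasCompactSupport <| hc.mono' fun _ hx =>
    by_contra fun h => hx (gradient_eq_zero_of_notMem_tsupport h)

theorem hasCompactSupport_inner_gradient (X : En n → En n) (hc : HasCompactSupport ψ) :
    HasCompactSupport fun x => ⟪X x, gradient ψ x⟫ :=
  hc.mono' fun x hx => by_contra fun h => hx <| by
    simp only [gradient_eq_zero_of_notMem_tsupport h, inner_zero_right]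

theorem integrable_inner_gradient (hU : IsOpen U) (hX : ContinuousOn X U) (hψ : ContDiff ℝ 1 ψ)
    (hc : HasCompactSupport ψ) (hs : tsupport ψ ⊆ U) :
    Integrable fun x => ⟪X x, gradient ψ x⟫ :=
  (continuous_inner_gradient hU hX hψ hs).integrable_of_hasCompactSupport
    (hasCompactSupport_inner_gradient X hc)

namespace IsWeaklyDivFreeOn

theorem mono (h : IsWeaklyDivFreeOn X U) (hVU : V ⊆ U) : IsWeaklyDivFreeOn X V :=
  fun ψ hψ hc hs => h ψ hψ hc (hs.trans hVU)

theorem congr (h : IsWeaklyDivFreeOn X U) (hXY : EqOn X Y U) : IsWeaklyDivFreeOn Y U := by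
  intro ψ hψ hc hs
  rw [← h ψ hψ hc hs]
  congr 1 with x
  by_cases hx : x ∈ tsupport ψ
  · rw [hXY (hs hx)]
  · rw [gradient_eq_zero_of_notMem_tsupport hx, inner_zero_right, inner_zero_right]

theorem const_smul (h : IsWeaklyDivFreeOn X U) (c : ℝ) :
    IsWeaklyDivFreeOn (fun x => c • X x) U := fun ψ hψ hc hs => by
  simp only [real_inner_smul_left]
  rw [integral_const_mul, h ψ hψ hc hs, mul_zero]

theorem sub (hX : IsWeaklyDivFreeOn X U) (hY : IsWeaklyDivFreeOn Y U) (hU : IsOpen U)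
    (hXc : ContinuousOn X U) (hYc : ContinuousOn Y U) :
    IsWeaklyDivFreeOn (fun x => X x - Y x) U := fun ψ hψ hc hs => by
  simp only [inner_sub_left]
  rw [integral_sub (integrable_inner_gradient hU hXc hψ hc hs)
    (integrable_inner_gradient hU hYc hψ hc hs), hX ψ hψ hc hs, hY ψ hψ hc hs, sub_zero]

theorem comp_add_right (h : IsWeaklyDivFreeOn X U) (a : En n) :
    IsWeaklyDivFreeOn (fun x => X (x + a)) {x | x + a ∈ U} := by
  intro ψ hψ hc hs
  have hsupp : tsupport (fun x => ψ (x + -a)) = (fun x => x + -a) ⁻¹' tsupport ψ :=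
    tsupport_comp_eq_preimage ψ (Homeomorph.addRight (-a))
  have := h (fun x => ψ (x + -a)) (hψ.comp (contDiff_id.add contDiff_const))
    (hc.comp_homeomorph (Homeomorph.addRight (-a)))
    (hsupp ▸ fun x hx => by simpa only [mem_ofPred_eq, neg_add_cancel_right] using hs hx)
  rw [← integral_add_right_eq_self _ a] at this
  simpa only [gradient_comp_add_right, add_neg_cancel_right] using this

end IsWeaklyDivFreeOn

theorem isWeaklyDivFreeOn_of_isTestFun (hU : IsOpen U) (hX : ContinuousOn X U)
    (h : ∀ φ, IsTestFun U φ → ∫ x in U, ⟪X x, gradient φ x⟫ = 0) : IsWeaklyDivFreeOn X U := by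
  intro ψ hψ hc hs
  obtain ⟨δ, hδ, hsub⟩ := hc.isCompact.exists_cthickening_subset_open hU hs
  set K := cthickening δ (tsupport ψ)
  have hK : IsCompact K := hc.isCompact.cthickening
  obtain ⟨C, hC⟩ := hK.exists_bound_of_continuousOn (hX.mono hsub)
  have hbound : ∀ ε : ℝ, 0 < ε → ‖∫ x, ⟪X x, gradient ψ x⟫‖ ≤ C * ε * volume.real K := by
    intro ε hε
    obtain ⟨φ, hφ, hφs, hφε⟩ := exists_contDiff_norm_gradient_sub_le hψ hc hε hδ
    have hφ1 : ContDiff ℝ 1 φ := hφ.of_le (by exact_mod_cast le_top)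
    have hφc : HasCompactSupport φ := hK.of_isClosed_subset (isClosed_tsupport φ) hφs
    have hφ0 : ∫ x, ⟪X x, gradient φ x⟫ = 0 := by
      rw [← h φ ⟨hφ, hφc, hφs.trans hsub⟩]
      refine (setIntegral_eq_integral_of_forall_compl_eq_zero fun x hx => ?_).symm
      rw [gradient_eq_zero_of_notMem_tsupport fun hxφ => hx (hsub (hφs hxφ)), inner_zero_right]
    have hdiff : ∫ x, ⟪X x, gradient ψ x⟫ = ∫ x in K, ⟪X x, gradient ψ x - gradient φ x⟫ := by
      rw [setIntegral_eq_integral_of_forall_compl_eq_zero fun x hx => ?_]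
      · simp only [inner_sub_right]
        rw [integral_sub (integrable_inner_gradient hU hX hψ hc hs)
          (integrable_inner_gradient hU hX hφ1 hφc (hφs.trans hsub)), hφ0, sub_zero]
      · rw [gradient_eq_zero_of_notMem_tsupport fun hxφ => hx (hφs hxφ),
          gradient_eq_zero_of_notMem_tsupport fun hxψ => hx (self_subset_cthickening _ hxψ),
          sub_zero, inner_zero_right]
    rw [hdiff]
    exact norm_setIntegral_le_of_norm_le_const hK.measure_lt_top fun x hx =>
      (norm_inner_le_norm _ _).trans
        (mul_le_mul (hC x hx) (hφε x) (norm_nonneg _) ((norm_nonneg _).trans (hC x hx)))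
  have hlim : Tendsto (fun ε : ℝ => C * ε * volume.real K) (𝓝[>] 0) (𝓝 0) := by
    have : Continuous fun ε : ℝ => C * ε * volume.real K := by fun_prop
    simpa using (this.tendsto 0).mono_left nhdsWithin_le_nhds
  exact norm_le_zero_iff.1 (ge_of_tendsto hlim (eventually_mem_nhdsWithin.mono hbound))

theorem fderiv_eq_sum_single (f : En n → ℝ) (x w : En n) :
    fderiv ℝ f x w = ∑ i, w i * fderiv ℝ f x (EuclideanSpace.single i 1) := by
  conv_lhs => rw [← (EuclideanSpace.basisFun (Fin n) ℝ).sum_repr w]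
  simp only [map_sum, map_smul, smul_eq_mul, EuclideanSpace.basisFun_apply,
    EuclideanSpace.basisFun_repr]

theorem integral_mul_fderiv_eq_neg_of_contDiffOn {f : En n → ℝ} (hU : IsOpen U)
    (hf : ContDiffOn ℝ 1 f U) (hψ : ContDiff ℝ 1 ψ) (hc : HasCompactSupport ψ)
    (hs : tsupport ψ ⊆ U) (w : En n) :
    Integrable (fun x => fderiv ℝ f x w * ψ x) ∧ Integrable (fun x => f x * fderiv ℝ ψ x w) ∧
      ∫ x, f x * fderiv ℝ ψ x w = -∫ x, fderiv ℝ f x w * ψ x := by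
  have hint : ∀ h : En n → ℝ, ContinuousOn h U → (∀ x, x ∉ tsupport ψ → h x = 0) →
      Integrable h := fun h hh hh0 =>
    ((hh.mono hs).integrableOn_compact hc).integrable_of_forall_notMem_eq_zero hh0
  have hψ0 : ∀ x, x ∉ tsupport ψ → ψ x = 0 := fun x hx => image_eq_zero_of_notMem_tsupport hx
  have hint₁ : Integrable fun x => fderiv ℝ f x w * ψ x :=
    hint _ (((hf.continuousOn_fderiv_of_isOpen hU le_rfl).clm_apply continuousOn_const).mul
      hψ.continuous.continuousOn) fun x hx => by rw [hψ0 x hx, mul_zero]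
  have hint₂ : Integrable fun x => f x * fderiv ℝ ψ x w :=
    hint _ (hf.continuousOn.mul
      ((hψ.continuous_fderiv one_ne_zero).continuousOn.clm_apply continuousOn_const))
      fun x hx => by rw [fderiv_of_notMem_tsupport ℝ hx, zero_apply, mul_zero]
  refine ⟨hint₁, hint₂, integral_mul_fderiv_eq_neg_fderiv_mul_of_integrable hint₁ hint₂
    (hint _ (hf.continuousOn.mul hψ.continuous.continuousOn) fun x hx => by
      rw [hψ0 x hx, mul_zero])
    (fun x hx => (hf.contDiffAt (hU.mem_nhds (hs hx))).differentiableAt one_ne_zero)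
    fun x _ => hψ.differentiable one_ne_zero x⟩

theorem isWeaklyDivFreeOn_of_divg_eq_zero (hU : IsOpen U) (hX : ContDiffOn ℝ 1 X U)
    (hdiv : ∀ x ∈ U, divg X x = 0) : IsWeaklyDivFreeOn X U := by
  intro ψ hψ hc hs
  have hXi : ∀ i, ContDiffOn ℝ 1 (fun x => X x i) U := fun i =>
    (EuclideanSpace.proj i : En n →L[ℝ] ℝ).contDiff.comp_contDiffOn hX
  have hparts := fun i => integral_mul_fderiv_eq_neg_of_contDiffOn hU (hXi i) hψ hc hs
    (EuclideanSpace.single i 1)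
  have hexpand : ∀ x, ⟪X x, gradient ψ x⟫ =
      ∑ i, X x i * fderiv ℝ ψ x (EuclideanSpace.single i 1) := fun x => by
    rw [real_inner_comm, inner_gradient_left, fderiv_eq_sum_single]
  have hdivψ : ∀ x, ∑ i, fderiv ℝ (fun y => X y i) x (EuclideanSpace.single i 1) * ψ x = 0 := by
    intro x
    by_cases hx : x ∈ tsupport ψ
    · have hXx := (hX.contDiffAt (hU.mem_nhds (hs hx))).differentiableAt one_ne_zero
      have hcoord : ∀ i, fderiv ℝ (fun y => X y i) x (EuclideanSpace.single i 1) =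
          fderiv ℝ X x (EuclideanSpace.single i 1) i := fun i =>
        congrArg (· (EuclideanSpace.single i 1))
          ((EuclideanSpace.proj i : En n →L[ℝ] ℝ).hasFDerivAt.comp x hXx.hasFDerivAt).fderiv
      rw [← Finset.sum_mul, Finset.sum_congr rfl fun i _ => hcoord i]
      exact mul_eq_zero_of_left (hdiv x (hs hx)) _
    · simp only [image_eq_zero_of_notMem_tsupport hx, mul_zero, Finset.sum_const_zero]
  simp only [hexpand]
  rw [integral_finsetSum _ fun i _ => (hparts i).2.1,
    Finset.sum_congr rfl fun i _ => (hparts i).2.2, Finset.sum_neg_distrib,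
    ← integral_finsetSum _ fun i _ => (hparts i).1, neg_eq_zero]
  exact integral_eq_zero_of_ae (Eventually.of_forall hdivψ)

theorem hasDerivAt_sq_max_zero (t : ℝ) :
    HasDerivAt (fun t : ℝ => max t 0 ^ 2) (2 * max t 0) t := by
  refine hasDerivAt_of_hasDerivAt_of_ne' (x := 0) (g := fun t => 2 * max t 0) (fun s hs => ?_)
    (by fun_prop) (by fun_prop) t
  rcases hs.lt_or_gt with hs | hs
  · refine (hasDerivAt_const s (0 : ℝ)).congr_of_eventuallyEq ?_ |>.congr_deriv ?_
    · filter_upwards [gt_mem_nhds hs] with r hr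
      rw [max_eq_right hr.le, zero_pow two_ne_zero]
    · rw [max_eq_right hs.le, mul_zero]
  · refine (hasDerivAt_pow 2 s).congr_of_eventuallyEq ?_ |>.congr_deriv ?_
    · filter_upwards [lt_mem_nhds hs] with r hr
      rw [max_eq_left hr.le]
    · rw [max_eq_left hs.le, pow_one, Nat.cast_two]

theorem contDiff_sq_max_zero : ContDiff ℝ 1 fun t : ℝ => max t 0 ^ 2 := by
  rw [contDiff_one_iff_deriv, show deriv (fun t : ℝ => max t 0 ^ 2) = fun t => 2 * max t 0 from
    funext fun t => (hasDerivAt_sq_max_zero t).deriv]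
  exact ⟨fun t => (hasDerivAt_sq_max_zero t).differentiableAt, by fun_prop⟩

/-- The test function `(g⁺)²` in `U`, extended by zero. -/
def truncSq (U : Set (En n)) (g : En n → ℝ) : En n → ℝ := U.indicator fun x => max (g x) 0 ^ 2

theorem truncSq_eq_zero (hg : ∀ x ∈ U \ K, g x ≤ 0) {x : En n} (hx : x ∉ K) :
    truncSq U g x = 0 := by
  by_cases hU : x ∈ U
  · rw [truncSq, indicator_of_mem hU, max_eq_right (hg x ⟨hU, hx⟩), zero_pow two_ne_zero]
  · rw [truncSq, indicator_of_notMem hU]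

theorem tsupport_truncSq_subset (hK : IsClosed K) (hg : ∀ x ∈ U \ K, g x ≤ 0) :
    tsupport (truncSq U g) ⊆ K :=
  closure_minimal (fun _ hx => by_contra fun h => hx (truncSq_eq_zero hg h)) hK

theorem truncSq_eventuallyEq (hU : IsOpen U) {x : En n} (hx : x ∈ U) :
    truncSq U g =ᶠ[𝓝 x] fun x => max (g x) 0 ^ 2 := by
  filter_upwards [hU.mem_nhds hx] with y hy
  rw [truncSq, indicator_of_mem hy]

theorem contDiff_truncSq (hU : IsOpen U) (hgd : ContDiffOn ℝ 1 g U) (hK : IsClosed K)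
    (hKU : K ⊆ U) (hg : ∀ x ∈ U \ K, g x ≤ 0) : ContDiff ℝ 1 (truncSq U g) := by
  rw [contDiff_iff_contDiffAt]
  intro x
  by_cases hx : x ∈ K
  · exact (contDiff_sq_max_zero.contDiffAt.comp x
      (hgd.contDiffAt (hU.mem_nhds (hKU hx)))).congr_of_eventuallyEq
        (truncSq_eventuallyEq hU (hKU hx))
  · refine (contDiffAt_const (c := (0 : ℝ))).congr_of_eventuallyEq ?_
    filter_upwards [hK.isOpen_compl.mem_nhds hx] with y hy
    exact truncSq_eq_zero hg hy

theorem gradient_truncSq (hU : IsOpen U) (hgd : ContDiffOn ℝ 1 g U) {x : En n} (hx : x ∈ U) :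
    gradient (truncSq U g) x = (2 * max (g x) 0) • gradient g x := by
  rw [(truncSq_eventuallyEq hU hx).gradient_eq]
  exact gradient_comp_of_hasDerivAt (hasDerivAt_sq_max_zero (g x))
    ((hgd.contDiffAt (hU.mem_nhds hx)).differentiableAt one_ne_zero)

theorem gradient_truncSq_eq_zero (hU : IsOpen U) (hgd : ContDiffOn ℝ 1 g U)
    (hs : tsupport (truncSq U g) ⊆ U) {x : En n} (hx : x ∉ U ∩ {x | 0 < g x}) :
    gradient (truncSq U g) x = 0 := by
  by_cases hxU : x ∈ U
  · rw [gradient_truncSq hU hgd hxU, max_eq_right (not_lt.1 fun h => hx ⟨hxU, h⟩), mul_zero,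
      zero_smul]
  · exact gradient_eq_zero_of_notMem_tsupport fun h => hxU (hs h)

end WeaklyDivFree

section PHarmonic

variable {n : ℕ} {N : MinkowskiNorm n} {p : ℝ} {U V K : Set (En n)} {u u₁ u₂ : En n → ℝ}

/-- `C¹` weak solutions of the Finsler `p`-Laplace equation in `U`, tested with `C¹` functions. -/
def IsPHarmonicOn (N : MinkowskiNorm n) (p : ℝ) (U : Set (En n)) (u : En n → ℝ) : Prop :=
  ContDiffOn ℝ 1 u U ∧ IsWeaklyDivFreeOn (fun x => N.flux p (gradient u x)) U

theorem continuousOn_flux_gradient (hp : 1 < p) (hU : IsOpen U) (hu : ContDiffOn ℝ 1 u U) :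
    ContinuousOn (fun x => N.flux p (gradient u x)) U :=
  (N.continuous_flux hp).comp_continuousOn (continuousOn_gradient hu hU)

theorem isPHarmonicOn_of_isWeakPHarmonic (hp : 1 < p) (hU : IsOpen U) (hu : ContDiffOn ℝ 1 u U)
    (h : IsWeakPHarmonic N U p u) : IsPHarmonicOn N p U u :=
  ⟨hu, isWeaklyDivFreeOn_of_isTestFun hU (continuousOn_flux_gradient hp hU hu) fun φ hφ => by
    simpa only [MinkowskiNorm.flux, real_inner_smul_left] using h φ hφ⟩

theorem mem_compl_closedBall_zero_iff {r : ℝ} {x : En n} :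
    x ∈ (closedBall (0 : En n) r)ᶜ ↔ r < ‖x‖ := by
  rw [mem_compl_iff, mem_closedBall_zero_iff, not_le]

namespace IsPHarmonicOn

theorem mono (h : IsPHarmonicOn N p U u) (hVU : V ⊆ U) : IsPHarmonicOn N p V u :=
  ⟨h.1.mono hVU, h.2.mono hVU⟩

theorem const_mul (h : IsPHarmonicOn N p U u) {c : ℝ} (hc : 0 < c) :
    IsPHarmonicOn N p U fun x => c * u x := by
  refine ⟨contDiffOn_const.mul h.1, ?_⟩
  simp only [gradient_const_mul, N.flux_smul hc]
  exact h.2.const_smul _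

theorem add_const (h : IsPHarmonicOn N p U u) (c : ℝ) : IsPHarmonicOn N p U fun x => u x + c := by
  refine ⟨h.1.add contDiffOn_const, ?_⟩
  simp only [gradient_add_const]
  exact h.2

theorem comp_add_right (h : IsPHarmonicOn N p U u) (a : En n) :
    IsPHarmonicOn N p {x | x + a ∈ U} fun x => u (x + a) := by
  refine ⟨h.1.comp (contDiff_id.add contDiff_const).contDiffOn fun x hx => hx, ?_⟩
  simp only [gradient_comp_add_right]
  exact h.2.comp_add_right a

theorem contDiffAt (h : IsPHarmonicOn N p U u) (hU : IsOpen U) {x : En n} (hx : x ∈ U) :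
    ContDiffAt ℝ 1 u x :=
  h.1.contDiffAt (hU.mem_nhds hx)

theorem differentiableAt (h : IsPHarmonicOn N p U u) (hU : IsOpen U) {x : En n} (hx : x ∈ U) :
    DifferentiableAt ℝ u x :=
  (h.contDiffAt hU hx).differentiableAt one_ne_zero

theorem gradient_truncSq_sub_eq_zero (hp : 1 < p) (hU : IsOpen U) (h₁ : IsPHarmonicOn N p U u₁)
    (h₂ : IsPHarmonicOn N p U u₂) (hK : IsCompact K) (hKU : K ⊆ U)
    (hle : ∀ x ∈ U \ K, u₁ x - u₂ x ≤ 0) (x : En n) :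
    gradient (truncSq U fun y => u₁ y - u₂ y) x = 0 := by
  set ψ := truncSq U fun y => u₁ y - u₂ y
  set X : En n → En n := fun x => N.flux p (gradient u₁ x) - N.flux p (gradient u₂ x)
  have hsub : ContDiffOn ℝ 1 (fun y => u₁ y - u₂ y) U := h₁.1.sub h₂.1
  have hX₁ := continuousOn_flux_gradient (N := N) hp hU h₁.1
  have hX₂ := continuousOn_flux_gradient (N := N) hp hU h₂.1
  have hψ : ContDiff ℝ 1 ψ := contDiff_truncSq hU hsub hK.isClosed hKU hle
  have hψs : tsupport ψ ⊆ K := tsupport_truncSq_subset hK.isClosed hle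
  have hψc : HasCompactSupport ψ := hK.of_isClosed_subset (isClosed_tsupport ψ) hψs
  have hgrad : ∀ y ∈ U, gradient ψ y =
      (2 * max (u₁ y - u₂ y) 0) • (gradient u₁ y - gradient u₂ y) := fun y hy => by
    rw [gradient_truncSq hU hsub hy,
      gradient_sub (h₁.differentiableAt hU hy) (h₂.differentiableAt hU hy)]
  have hnotMem : ∀ y, y ∉ U → gradient ψ y = 0 := fun y hy =>
    gradient_eq_zero_of_notMem_tsupport fun h => hy (hKU (hψs h))
  have hcont : Continuous fun y => ⟪X y, gradient ψ y⟫ :=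
    continuous_inner_gradient hU (hX₁.sub hX₂) hψ (hψs.trans hKU)
  have hnonneg : ∀ y, 0 ≤ ⟪X y, gradient ψ y⟫ := fun y => by
    by_cases hy : y ∈ U
    · rw [hgrad y hy, real_inner_smul_right]
      exact mul_nonneg (by positivity) (N.inner_flux_sub_nonneg hp _ _)
    · rw [hnotMem y hy, inner_zero_right]
  have hzero : ⟪X x, gradient ψ x⟫ = 0 := by
    by_contra hx
    exact (hcont.integral_pos_of_hasCompactSupport_nonneg_nonzero
      (hasCompactSupport_inner_gradient X hψc) hnonneg hx).ne'
      (h₁.2.sub h₂.2 hU hX₁ hX₂ ψ hψ hψc (hψs.trans hKU))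
  by_cases hx : x ∈ U
  · rw [hgrad x hx] at hzero ⊢
    by_contra hne
    obtain ⟨hmax, hne⟩ := smul_ne_zero_iff.1 hne
    rw [real_inner_smul_right] at hzero
    exact (mul_ne_zero hmax (N.inner_flux_sub_pos hp (sub_ne_zero.1 hne)).ne') hzero
  · exact hnotMem x hx

theorem le_of_le_sdiff_compact [Nontrivial (En n)] (hp : 1 < p) (hU : IsOpen U)
    (h₁ : IsPHarmonicOn N p U u₁) (h₂ : IsPHarmonicOn N p U u₂) (hK : IsCompact K) (hKU : K ⊆ U)
    (hle : ∀ x ∈ U \ K, u₁ x ≤ u₂ x) {x : En n} (hx : x ∈ U) : u₁ x ≤ u₂ x := by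
  have hle' : ∀ x ∈ U \ K, u₁ x - u₂ x ≤ 0 := fun x hx => sub_nonpos.2 (hle x hx)
  have hψs := tsupport_truncSq_subset hK.isClosed hle'
  have hψ : truncSq U (fun y => u₁ y - u₂ y) = 0 := eq_zero_of_gradient_eq_zero
    (contDiff_truncSq hU (h₁.1.sub h₂.1) hK.isClosed hKU hle')
    (hK.of_isClosed_subset (isClosed_tsupport _) hψs)
    (gradient_truncSq_sub_eq_zero hp hU h₁ h₂ hK hKU hle')
  have hx0 : max (u₁ x - u₂ x) 0 ^ 2 = 0 := by
    simpa only [truncSq, indicator_of_mem hx, Pi.zero_apply] using congrFun hψ x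
  exact sub_nonpos.1 (max_eq_right_iff.1 (pow_eq_zero_iff two_ne_zero |>.1 hx0))

theorem le_of_le_sphere [Nontrivial (En n)] (hp : 1 < p) {R R' : ℝ} (hR : R < R')
    (h₁ : IsPHarmonicOn N p (closedBall 0 R)ᶜ u₁) (h₂ : IsPHarmonicOn N p (closedBall 0 R)ᶜ u₂)
    (hs : ∀ x : En n, ‖x‖ = R' → u₁ x ≤ u₂ x)
    (hinf : ∀ ε > 0, ∀ᶠ x in cocompact (En n), u₁ x ≤ u₂ x + ε) {x : En n} (hx : R' ≤ ‖x‖) :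
    u₁ x ≤ u₂ x := by
  refine le_of_forall_pos_le_add fun ε hε => ?_
  obtain rfl | hx := hx.eq_or_lt
  · exact (hs x rfl).trans (le_add_of_nonneg_right hε.le)
  have hsub : (closedBall (0 : En n) R')ᶜ ⊆ (closedBall 0 R)ᶜ :=
    compl_subset_compl.2 (closedBall_subset_closedBall hR.le)
  have h₂ε := h₂.add_const ε
  have hCR : {y : En n | R' ≤ ‖y‖} ⊆ (closedBall 0 R)ᶜ := fun y hy =>
    mem_compl_closedBall_zero_iff.2 (hR.trans_le hy)
  set K : Set (En n) := {y | R' ≤ ‖y‖} ∩ (fun y => u₁ y - (u₂ y + ε)) ⁻¹' Ici 0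
  have hKclosed : IsClosed K :=
    ((h₁.1.sub h₂ε.1).continuousOn.mono hCR).preimage_isClosed_of_isClosed
      (isClosed_le continuous_const continuous_norm) isClosed_Ici
  obtain ⟨t, ht, htε⟩ := mem_cocompact.1 (hinf (ε / 2) (half_pos hε))
  have hK : IsCompact K := ht.of_isClosed_subset hKclosed fun y hy => by
    by_contra hyt
    linarith [show u₁ y ≤ u₂ y + ε / 2 from htε hyt, show 0 ≤ u₁ y - (u₂ y + ε) from hy.2]
  refine (h₁.mono hsub).le_of_le_sdiff_compact hp isClosed_closedBall.isOpen_compl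
    (h₂ε.mono hsub) hK (fun y hy => mem_compl_closedBall_zero_iff.2 ?_) (fun y hy => ?_)
    (mem_compl_closedBall_zero_iff.2 hx)
  · refine lt_of_le_of_ne hy.1 fun h => ?_
    linarith [hs y h.symm, show 0 ≤ u₁ y - (u₂ y + ε) from hy.2]
  · by_contra! h
    exact hy.2 ⟨(mem_compl_closedBall_zero_iff.1 hy.1).le, sub_nonneg.2 h.le⟩

end IsPHarmonicOn

end PHarmonic

section DecayingPHarmonic

variable {n : ℕ} {N : MinkowskiNorm n} {p R : ℝ} {u v : En n → ℝ}

/-- Positive `p`-harmonic functions outside the ball of radius `R` which vanish at infinity: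
the behaviour at infinity of a `p`-capacitary potential. -/
structure IsDecayingPHarmonic (N : MinkowskiNorm n) (p R : ℝ) (v : En n → ℝ) : Prop where
  isPHarmonicOn : IsPHarmonicOn N p (closedBall 0 R)ᶜ v
  pos : ∀ x, R < ‖x‖ → 0 < v x
  tendsto : Tendsto v (cocompact (En n)) (𝓝 0)

namespace IsDecayingPHarmonic

theorem continuousOn (hv : IsDecayingPHarmonic N p R v) : ContinuousOn v (closedBall 0 R)ᶜ :=
  hv.isPHarmonicOn.1.continuousOn

theorem differentiableAt (hv : IsDecayingPHarmonic N p R v) {x : En n} (hx : R < ‖x‖) :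
    DifferentiableAt ℝ v x :=
  hv.isPHarmonicOn.differentiableAt isClosed_closedBall.isOpen_compl
    (mem_compl_closedBall_zero_iff.2 hx)

theorem exists_forall_le_mul [Nontrivial (En n)] (hp : 1 < p) (hu : IsDecayingPHarmonic N p R u)
    (hv : IsDecayingPHarmonic N p R v) :
    ∃ C : ℝ, 0 < C ∧ ∀ x, R + 1 ≤ ‖x‖ → u x ≤ C * v x := by
  have hsphere : sphere (0 : En n) (R + 1) ⊆ (closedBall 0 R)ᶜ := fun x hx =>
    mem_compl_closedBall_zero_iff.2 (by linarith [mem_sphere_zero_iff_norm.1 hx])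
  obtain ⟨C, hC⟩ := (isCompact_sphere 0 (R + 1)).exists_bound_of_continuousOn
    ((hu.continuousOn.mono hsphere).div (hv.continuousOn.mono hsphere) fun x hx =>
      (hv.pos x (mem_compl_closedBall_zero_iff.1 (hsphere hx))).ne')
  refine ⟨|C| + 1, by positivity, fun x hx => hu.isPHarmonicOn.le_of_le_sphere hp (lt_add_one R)
    (hv.isPHarmonicOn.const_mul (by positivity)) (fun y hy => ?_) (fun ε hε => ?_) hx⟩
  · have hy' : y ∈ sphere (0 : En n) (R + 1) := mem_sphere_zero_iff_norm.2 hy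
    rw [← div_le_iff₀ (hv.pos y (by linarith))]
    have : ‖u y / v y‖ ≤ C := hC y hy'
    linarith [Real.le_norm_self (u y / v y), le_abs_self C]
  · have hlim := hu.tendsto.sub (hv.tendsto.const_mul (|C| + 1))
    rw [mul_zero, sub_zero] at hlim
    filter_upwards [hlim.eventually (gt_mem_nhds hε)] with y hy
    linarith

theorem exists_forall_norm_eq_add_le (hv : IsDecayingPHarmonic N p R v) :
    ∃ C : ℝ, 0 < C ∧ ∀ w : En n, ‖w‖ ≤ 1 → ∀ x, ‖x‖ = R + 2 →
      v (x + w) ≤ (1 + C * ‖w‖) * v x := by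
  set A : Set (En n) := closedBall 0 (R + 3) \ ball 0 (R + 1)
  have hA : IsCompact A := (isCompact_closedBall 0 (R + 3)).diff isOpen_ball
  have hmemA : ∀ {x : En n}, x ∈ A ↔ ‖x‖ ≤ R + 3 ∧ R + 1 ≤ ‖x‖ := by
    simp only [A, Set.mem_sdiff, mem_closedBall_zero_iff, mem_ball_zero_iff, not_lt, implies_true]
  have hAR : A ⊆ (closedBall 0 R)ᶜ := fun x hx =>
    mem_compl_closedBall_zero_iff.2 (by linarith [(hmemA.1 hx).2])
  obtain ⟨m, hm, hmv⟩ := hA.exists_forall_le' (hv.continuousOn.mono hAR)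
    fun x hx => hv.pos x (mem_compl_closedBall_zero_iff.1 (hAR hx))
  obtain ⟨L, hL⟩ := hA.exists_bound_of_continuousOn
    ((continuousOn_gradient hv.isPHarmonicOn.1 isClosed_closedBall.isOpen_compl).mono hAR)
  refine ⟨|L| / m + 1, by positivity, fun w hw x hx => ?_⟩
  have hball : closedBall x 1 ⊆ A := fun z hz => by
    have hzx := mem_closedBall_iff_norm.1 hz
    have h₁ := norm_sub_norm_le z x
    have h₂ := norm_sub_norm_le x z
    rw [norm_sub_rev] at h₂
    exact hmemA.2 ⟨by linarith, by linarith⟩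
  have hx1 : x ∈ closedBall x 1 := mem_closedBall_self zero_le_one
  have hosc := abs_sub_le_of_norm_gradient_le (convex_closedBall x 1)
    (fun z hz => hv.differentiableAt (mem_compl_closedBall_zero_iff.1 (hAR (hball hz))))
    (fun z hz => (hL z (hball hz)).trans (le_abs_self L)) hx1
    (y := x + w) (by simpa only [mem_closedBall_iff_norm, add_sub_cancel_left] using hw)
  have hmx : m ≤ v x := hmv x (hball hx1)
  have hLm : |L| ≤ (|L| / m + 1) * v x := by
    calc |L| = |L| / m * m := (div_mul_cancel₀ _ hm.ne').symm
      _ ≤ (|L| / m + 1) * v x := by gcongr; exact le_add_of_nonneg_right zero_le_one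
  rw [add_sub_cancel_left] at hosc
  linarith [le_abs_self (v (x + w) - v x), mul_le_mul_of_nonneg_right hLm (norm_nonneg w)]

theorem exists_forall_add_le [Nontrivial (En n)] (hp : 1 < p) (hv : IsDecayingPHarmonic N p R v) :
    ∃ C : ℝ, 0 < C ∧ ∀ w : En n, ‖w‖ ≤ 1 → ∀ x, R + 2 ≤ ‖x‖ →
      v (x + w) ≤ (1 + C * ‖w‖) * v x := by
  obtain ⟨C, hC, hsphere⟩ := hv.exists_forall_norm_eq_add_le
  refine ⟨C, hC, fun w hw x hx => ?_⟩
  have hshift : (closedBall (0 : En n) (R + 1))ᶜ ⊆ {x | x + w ∈ (closedBall 0 R)ᶜ} := by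
    intro y hy
    have := mem_compl_closedBall_zero_iff.1 hy
    have := norm_sub_le_norm_add y w
    exact mem_compl_closedBall_zero_iff.2 (by linarith)
  have hsub : (closedBall (0 : En n) (R + 1))ᶜ ⊆ (closedBall 0 R)ᶜ :=
    compl_subset_compl.2 (closedBall_subset_closedBall (by linarith))
  refine ((hv.isPHarmonicOn.comp_add_right w).mono hshift).le_of_le_sphere hp
    (by linarith : R + 1 < R + 2) ((hv.isPHarmonicOn.const_mul (by positivity)).mono hsub)
    (hsphere w hw) (fun ε hε => ?_) hx
  have hlim := (hv.tendsto.comp (Homeomorph.addRight w).isClosedEmbedding.tendsto_cocompact).sub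
    (hv.tendsto.const_mul (1 + C * ‖w‖))
  rw [mul_zero, sub_zero] at hlim
  filter_upwards [hlim.eventually (gt_mem_nhds hε)] with y hy
  simp only [Function.comp_apply, Homeomorph.coe_addRight] at hy
  linarith

theorem exists_norm_gradient_le [Nontrivial (En n)] (hp : 1 < p)
    (hv : IsDecayingPHarmonic N p R v) :
    ∃ C : ℝ, 0 < C ∧ ∀ x, R + 2 ≤ ‖x‖ → ‖gradient v x‖ ≤ C * v x := by
  obtain ⟨C, hC, hshift⟩ := hv.exists_forall_add_le hp
  refine ⟨C, hC, fun x hx => ?_⟩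
  have hRx : R < ‖x‖ := by linarith
  refine norm_le_of_forall_inner_le (mul_pos hC (hv.pos x hRx)).le fun e he =>
    inner_gradient_le_of_eventually_slope_le (hv.differentiableAt hRx) ?_
  filter_upwards [Ioo_mem_nhdsGT one_pos] with s hs
  have hse : ‖s • e‖ = s := by rw [norm_smul, he, mul_one, Real.norm_of_nonneg hs.1.le]
  have := hshift (s • e) (hse.trans_le hs.2.le) x hx
  rw [hse] at this
  rw [div_le_iff₀ hs.1]
  linarith

end IsDecayingPHarmonic

end DecayingPHarmonic

namespace MinkowskiNorm

variable {n : ℕ} (N : MinkowskiNorm n) {p : ℝ} {x : En n}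

theorem flux_neg (p : ℝ) (ξ : En n) : N.flux p (-ξ) = -N.flux p ξ := by
  have h := gradient_comp_smul N.F (-1) ξ
  simp only [neg_one_smul, N.even] at h
  rw [flux, N.even, flux, h, smul_neg, neg_neg]

theorem flux_two : N.flux 2 = N.dualMap := by
  funext ξ
  rw [flux, dualMap, show (2 : ℝ) - 1 = 1 by norm_num, Real.rpow_one]

theorem dualMap_zero : N.dualMap 0 = 0 := by
  rw [dualMap, N.map_zero, zero_smul]

theorem dualMap_injective : Function.Injective N.dualMap := by
  intro ξ η h
  by_contra hne
  have := N.inner_flux_sub_pos one_lt_two hne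
  rw [N.flux_two, h, sub_self, inner_zero_left] at this
  exact lt_irrefl _ this

theorem tendsto_half_sq_sub_inner (x : En n) :
    Tendsto (fun ξ => N.F ξ ^ 2 / 2 - ⟪x, ξ⟫) (cocompact (En n)) atTop := by
  obtain ⟨c, _, hc, _, hN⟩ := N.exists_norm_equiv
  have hquad : Tendsto (fun t : ℝ => t * (c ^ 2 / 2 * t - ‖x‖)) atTop atTop :=
    tendsto_id.atTop_mul_atTop₀
      (tendsto_atTop_add_const_right _ _ (tendsto_id.const_mul_atTop (by positivity)))
  refine tendsto_atTop_mono (fun ξ => ?_) (hquad.comp (tendsto_norm_cocompact_atTop (E := En n)))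
  have hF : (c * ‖ξ‖) ^ 2 ≤ N.F ξ ^ 2 := pow_le_pow_left₀ (by positivity) (hN ξ).1 2
  simp only [Function.comp_apply]
  linarith [real_inner_le_norm x ξ]

theorem dualMap_surjective : Function.Surjective N.dualMap := by
  intro x
  rcases eq_or_ne x 0 with rfl | hx
  · exact ⟨0, N.dualMap_zero⟩
  set φ : En n → ℝ := fun ξ => N.F ξ ^ 2 / 2 - ⟪x, ξ⟫ with hφ
  have hcont : Continuous φ :=
    ((N.continuous.pow 2).div_const 2).sub (continuous_const.inner continuous_id)
  obtain ⟨ξ, hmin⟩ := hcont.exists_forall_le (N.tendsto_half_sq_sub_inner x)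
  have hξ : ξ ≠ 0 := by
    rintro rfl
    have hF := N.pos x hx
    have hray := hmin ((‖x‖ ^ 2 / N.F x ^ 2) • x)
    simp only [hφ, N.homog _ (by positivity : 0 ≤ ‖x‖ ^ 2 / N.F x ^ 2), N.map_zero,
      real_inner_smul_right, real_inner_self_eq_norm_sq, inner_zero_right] at hray
    have heq : (‖x‖ ^ 2 / N.F x ^ 2 * N.F x) ^ 2 / 2 - ‖x‖ ^ 2 / N.F x ^ 2 * ‖x‖ ^ 2 =
        -(‖x‖ ^ 4 / N.F x ^ 2 / 2) := by field_simp; ring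
    have : 0 < ‖x‖ ^ 4 / N.F x ^ 2 / 2 := by positivity
    linarith
  refine ⟨ξ, ext_inner_right ℝ fun w => ?_⟩
  have hlocal : IsLocalMin φ ξ := Eventually.of_forall hmin
  have hd := ((N.contDiffAt_half_sq hξ).differentiableAt two_ne_zero).hasFDerivAt.sub
    (innerSL ℝ x).hasFDerivAt
  have := DFunLike.congr_fun (hd.fderiv.symm.trans hlocal.fderiv_eq_zero) w
  rw [← N.gradient_half_sq hξ, inner_gradient_left]
  exact sub_eq_zero.1 this

/-- The inverse of the duality map `F F_ξ`. -/
def dualInv (x : En n) : En n :=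
  (Equiv.ofBijective N.dualMap ⟨N.dualMap_injective, N.dualMap_surjective⟩).symm x

theorem dualMap_dualInv (x : En n) : N.dualMap (N.dualInv x) = x :=
  Equiv.ofBijective_apply_symm_apply _ _ x

theorem dualInv_ne_zero (hx : x ≠ 0) : N.dualInv x ≠ 0 := fun h => hx <| by
  rw [← N.dualMap_dualInv x, h, N.dualMap_zero]

theorem dualInv_smul {c : ℝ} (hc : 0 < c) (x : En n) : N.dualInv (c • x) = c • N.dualInv x :=
  N.dualMap_injective <| by rw [N.dualMap_dualInv, N.dualMap_smul hc, N.dualMap_dualInv]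

theorem fderiv_dualMap_injective {ξ : En n} (hξ : ξ ≠ 0) :
    Function.Injective (fderiv ℝ N.dualMap ξ) := by
  refine (injective_iff_map_eq_zero _).2 fun w hw => ?_
  by_contra h
  have := N.inner_fderiv_dualMap_pos hξ h
  rw [hw, inner_zero_left] at this
  exact lt_irrefl _ this

theorem contDiffAt_dualInv (hx : x ≠ 0) : ContDiffAt ℝ 1 N.dualInv x := by
  have hξ := N.dualInv_ne_zero hx
  have hcd := N.contDiffAt_dualMap hξ
  set e : En n ≃L[ℝ] En n := (LinearEquiv.ofInjectiveEndo
    (fderiv ℝ N.dualMap (N.dualInv x) : En n →ₗ[ℝ] En n)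
    (N.fderiv_dualMap_injective hξ)).toContinuousLinearEquiv
  have hd : HasFDerivAt N.dualMap (e : En n →L[ℝ] En n) (N.dualInv x) :=
    (N.differentiableAt_dualMap hξ).hasFDerivAt
  have hinv := hcd.to_localInverse hd one_ne_zero
  have hright := (hcd.hasStrictFDerivAt' hd one_ne_zero).eventually_right_inverse
  rw [N.dualMap_dualInv] at hinv hright
  refine hinv.congr_of_eventuallyEq ?_
  filter_upwards [hright] with y hy
  exact N.dualMap_injective ((N.dualMap_dualInv y).trans hy.symm)

/-- The dual norm `F°`, encoded as `F` composed with the inverse of the duality map, which makes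
its smoothness a consequence of the inverse function theorem. -/
def dualNorm (x : En n) : ℝ := N.F (N.dualInv x)

theorem dualNorm_pos (hx : x ≠ 0) : 0 < N.dualNorm x := N.pos _ (N.dualInv_ne_zero hx)

theorem dualNorm_smul {c : ℝ} (hc : 0 < c) (x : En n) :
    N.dualNorm (c • x) = c • N.dualNorm x := by
  rw [dualNorm, N.dualInv_smul hc, N.homog c hc.le, dualNorm, smul_eq_mul]

theorem contDiffAt_dualNorm (hx : x ≠ 0) : ContDiffAt ℝ 1 N.dualNorm x :=
  (N.contDiffAt (by simp) (N.dualInv_ne_zero hx)).comp x (N.contDiffAt_dualInv hx)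

theorem exists_dualNorm_equiv :
    ∃ c C : ℝ, 0 < c ∧ 0 < C ∧ ∀ x, c * ‖x‖ ≤ N.dualNorm x ∧ N.dualNorm x ≤ C * ‖x‖ :=
  exists_norm_equiv_of_homogeneous (fun _ hc => N.dualNorm_smul hc)
    (fun _ hx => (N.contDiffAt_dualNorm hx).continuousAt.continuousWithinAt)
    fun _ hx => N.dualNorm_pos hx

theorem fderiv_dualMap_fderiv_dualInv (hx : x ≠ 0) (w : En n) :
    fderiv ℝ N.dualMap (N.dualInv x) (fderiv ℝ N.dualInv x w) = w := by
  have hcomp := (N.differentiableAt_dualMap (N.dualInv_ne_zero hx)).hasFDerivAt.comp x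
    ((N.contDiffAt_dualInv hx).differentiableAt one_ne_zero).hasFDerivAt
  rw [show N.dualMap ∘ N.dualInv = id from funext N.dualMap_dualInv] at hcomp
  exact DFunLike.congr_fun (hcomp.unique (hasFDerivAt_id x)) w

theorem dualNorm_smul_gradient (hx : x ≠ 0) :
    N.dualNorm x • gradient N.dualNorm x = N.dualInv x := by
  have hξ := N.dualInv_ne_zero hx
  have hchain : fderiv ℝ N.dualNorm x = _ := ((N.differentiableAt hξ).hasFDerivAt.comp x
    ((N.contDiffAt_dualInv hx).differentiableAt one_ne_zero).hasFDerivAt).fderiv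
  refine ext_inner_right ℝ fun w => ?_
  calc ⟪N.dualNorm x • gradient N.dualNorm x, w⟫
      = ⟪N.dualMap (N.dualInv x), fderiv ℝ N.dualInv x w⟫ := by
        rw [real_inner_smul_left, inner_gradient_left, hchain, ContinuousLinearMap.comp_apply,
          ← inner_gradient_left, ← real_inner_smul_left, dualNorm, dualMap]
    _ = ⟪N.dualInv x, w⟫ := by
        rw [← N.fderiv_dualMap_self hξ, N.inner_fderiv_dualMap_comm hξ,
          N.fderiv_dualMap_fderiv_dualInv hx, real_inner_comm]

theorem contDiffAt_dualNorm_rpow (s : ℝ) (hx : x ≠ 0) :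
    ContDiffAt ℝ 1 (fun y => N.dualNorm y ^ s) x :=
  (N.contDiffAt_dualNorm hx).rpow_const_of_ne (N.dualNorm_pos hx).ne'

theorem gradient_dualNorm_rpow (s : ℝ) (hx : x ≠ 0) :
    gradient (fun y => N.dualNorm y ^ s) x = (s * N.dualNorm x ^ (s - 2)) • N.dualInv x := by
  have hG := N.dualNorm_pos hx
  rw [gradient_comp_of_hasDerivAt (Real.hasDerivAt_rpow_const (Or.inl hG.ne'))
    ((N.contDiffAt_dualNorm hx).differentiableAt one_ne_zero), ← N.dualNorm_smul_gradient hx,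
    smul_smul, mul_assoc, ← Real.rpow_add_one hG.ne']
  ring_nf

theorem fderiv_dualNorm_rpow_self (s : ℝ) (hx : x ≠ 0) :
    fderiv ℝ (fun y => N.dualNorm y ^ s) x x = s * N.dualNorm x ^ s := by
  have hG := N.dualNorm_pos hx
  have hd := (N.contDiffAt_dualNorm hx).differentiableAt one_ne_zero
  rw [(hd.hasFDerivAt.rpow_const (Or.inl hG.ne')).fderiv, _root_.smul_apply,
    fderiv_apply_self_of_homogeneous (fun _ hc => N.dualNorm_smul hc) hd, smul_eq_mul, mul_assoc,
    ← Real.rpow_add_one hG.ne', sub_add_cancel]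

end MinkowskiNorm

theorem divg_smul_id {n : ℕ} {f : En n → ℝ} {x : En n} (hf : DifferentiableAt ℝ f x) :
    divg (fun y => f y • y) x = n * f x + fderiv ℝ f x x := by
  have hd : fderiv ℝ (fun y => f y • y) x = _ := (hf.hasFDerivAt.smul (hasFDerivAt_id x)).fderiv
  rw [fderiv_eq_sum_single f x x]
  simp [divg, hd, Finset.sum_add_distrib, mul_comm]

namespace MinkowskiNorm

variable {n : ℕ} (N : MinkowskiNorm n) {p : ℝ}

theorem isWeaklyDivFreeOn_dualNorm_rpow_smul_id :
    IsWeaklyDivFreeOn (fun x => N.dualNorm x ^ (-(n : ℝ)) • x) {0}ᶜ := by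
  refine isWeaklyDivFreeOn_of_divg_eq_zero isOpen_compl_singleton
    (fun x hx => ((N.contDiffAt_dualNorm_rpow _ hx).smul contDiffAt_id).contDiffWithinAt)
    fun x hx => ?_
  rw [divg_smul_id ((N.contDiffAt_dualNorm_rpow _ hx).differentiableAt one_ne_zero),
    N.fderiv_dualNorm_rpow_self _ hx]
  ring

/-- The fundamental solution of the Finsler `p`-Laplacian, up to a multiplicative constant. -/
def fundamentalSolution (p : ℝ) (x : En n) : ℝ := N.dualNorm x ^ (-((n - p) / (p - 1)))

theorem flux_gradient_fundamentalSolution (hp : 1 < p) (hpn : p < n) {x : En n} (hx : x ≠ 0) :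
    N.flux p (gradient (N.fundamentalSolution p) x) =
      (-((n - p) / (p - 1)) ^ (p - 1)) • (N.dualNorm x ^ (-(n : ℝ)) • x) := by
  have hp' : 0 < p - 1 := sub_pos.2 hp
  have hγ : 0 < (n - p) / (p - 1) := div_pos (sub_pos.2 hpn) hp'
  have hG := N.dualNorm_pos hx
  have hexp : (-((n - p) / (p - 1)) - 2) * (p - 1) + (p - 2) = -(n : ℝ) := by
    field_simp
    ring
  calc N.flux p (gradient (N.fundamentalSolution p) x)
      = N.flux p (-(((n - p) / (p - 1) * N.dualNorm x ^ (-((n - p) / (p - 1)) - 2)) •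
          N.dualInv x)) := by
        rw [← neg_smul, ← neg_mul]
        exact congrArg _ (N.gradient_dualNorm_rpow _ hx)
    _ = -(((n - p) / (p - 1)) ^ (p - 1) * (N.dualNorm x ^ ((-((n - p) / (p - 1)) - 2) * (p - 1)) *
          N.dualNorm x ^ (p - 2))) • x := by
        rw [N.flux_neg, N.flux_smul (by positivity),
          N.flux_eq_rpow_smul_dualMap p (N.dualInv_ne_zero hx), N.dualMap_dualInv, smul_smul,
          Real.mul_rpow hγ.le (by positivity), ← Real.rpow_mul hG.le, neg_smul, mul_assoc, dualNorm]
    _ = _ := by rw [← Real.rpow_add hG, hexp, smul_smul, neg_mul]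

theorem isPHarmonicOn_fundamentalSolution (hp : 1 < p) (hpn : p < n) :
    IsPHarmonicOn N p {0}ᶜ (N.fundamentalSolution p) :=
  ⟨fun _ hx => (N.contDiffAt_dualNorm_rpow _ hx).contDiffWithinAt,
    (N.isWeaklyDivFreeOn_dualNorm_rpow_smul_id.const_smul _).congr
      fun _ hx => (N.flux_gradient_fundamentalSolution hp hpn hx).symm⟩

theorem tendsto_fundamentalSolution (hp : 1 < p) (hpn : p < n) :
    Tendsto (N.fundamentalSolution p) (cocompact (En n)) (𝓝 0) := by
  obtain ⟨c, _, hc, _, hN⟩ := N.exists_dualNorm_equiv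
  exact (tendsto_rpow_neg_atTop (div_pos (sub_pos.2 hpn) (sub_pos.2 hp))).comp
    (tendsto_atTop_mono (fun x => (hN x).1)
      ((tendsto_norm_cocompact_atTop (E := En n)).const_mul_atTop hc))

theorem isDecayingPHarmonic_fundamentalSolution (hp : 1 < p) (hpn : p < n) {R : ℝ} (hR : 0 ≤ R) :
    IsDecayingPHarmonic N p R (N.fundamentalSolution p) where
  isPHarmonicOn := (N.isPHarmonicOn_fundamentalSolution hp hpn).mono <|
    compl_subset_compl.2 (singleton_subset_iff.2 (mem_closedBall_self hR))
  pos _ hx := Real.rpow_pos_of_pos (N.dualNorm_pos (norm_pos_iff.1 (hR.trans_lt hx))) _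
  tendsto := N.tendsto_fundamentalSolution hp hpn

theorem exists_fundamentalSolution_le (hp : 1 < p) (hpn : p < n) :
    ∃ K : ℝ, 0 < K ∧ ∀ x y : En n, x ≠ 0 → ‖x‖ / 2 ≤ ‖y‖ →
      N.fundamentalSolution p y ≤ K * N.fundamentalSolution p x := by
  obtain ⟨c, C, hc, hC, hN⟩ := N.exists_dualNorm_equiv
  refine ⟨(c / (2 * C)) ^ (-((n - p) / (p - 1))), by positivity, fun x y hx hxy => ?_⟩
  have hG := N.dualNorm_pos hx
  rw [fundamentalSolution, fundamentalSolution, ← Real.mul_rpow (by positivity) hG.le]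
  refine Real.rpow_le_rpow_of_nonpos (by positivity) ?_
    (neg_nonpos.2 (div_pos (sub_pos.2 hpn) (sub_pos.2 hp)).le)
  calc c / (2 * C) * N.dualNorm x ≤ c / (2 * C) * (C * ‖x‖) := by gcongr; exact (hN x).2
    _ = c * (‖x‖ / 2) := by field_simp
    _ ≤ c * ‖y‖ := by gcongr
    _ ≤ N.dualNorm y := (hN y).1

end MinkowskiNorm

theorem IsDecayingPHarmonic.exists_harnack {n : ℕ} [Nontrivial (En n)] {N : MinkowskiNorm n}
    {p R : ℝ} {v : En n → ℝ} (hv : IsDecayingPHarmonic N p R v) (hp : 1 < p) (hpn : p < n)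
    (hR : 0 ≤ R) : ∃ K : ℝ, 0 < K ∧ ∀ x y : En n, R + 1 ≤ ‖x‖ → R + 1 ≤ ‖y‖ → ‖x‖ / 2 ≤ ‖y‖ →
      v y ≤ K * v x := by
  have hΓ := N.isDecayingPHarmonic_fundamentalSolution hp hpn hR
  obtain ⟨a, ha, hupper⟩ := exists_forall_le_mul hp hv hΓ
  obtain ⟨b, hb, hlower⟩ := exists_forall_le_mul hp hΓ hv
  obtain ⟨K, hK, hfund⟩ := N.exists_fundamentalSolution_le hp hpn
  refine ⟨a * K * b, by positivity, fun x y hx hy hxy => ?_⟩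
  calc v y ≤ a * N.fundamentalSolution p y := hupper y hy
    _ ≤ a * (K * N.fundamentalSolution p x) := by
        gcongr
        exact hfund x y (norm_pos_iff.1 (by linarith)) hxy
    _ ≤ a * (K * (b * v x)) := by gcongr; exact hlower x hx
    _ = a * K * b * v x := by ring

section Caccioppoli

variable {n : ℕ} {U : Set (En n)} {X : En n → En n} {η g : En n → ℝ}

theorem integrable_mul_inner_gradient_and_integral_eq (hX : IsWeaklyDivFreeOn X U) (hU : IsOpen U)
    (hXc : ContinuousOn X U) (hη : ContDiff ℝ 1 η) (hc : HasCompactSupport η)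
    (hs : tsupport η ⊆ U) (hg : ContDiffOn ℝ 1 g U) :
    Integrable (fun x => η x * ⟪X x, gradient g x⟫) ∧
      ∫ x, η x * ⟪X x, gradient g x⟫ = -∫ x, g x * ⟪X x, gradient η x⟫ := by
  have hgη : ContDiff ℝ 1 fun x => g x * η x :=
    contMDiff_iff_contDiff.1 <| contMDiff_of_tsupport fun x hx => contMDiffAt_iff_contDiffAt.2 <|
      (hg.contDiffAt (hU.mem_nhds (hs (tsupport_mul_subset_right hx)))).mul hη.contDiffAt
  have hgηc : HasCompactSupport fun x => g x * η x := hc.mul_left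
  have hgηs : tsupport (fun x => g x * η x) ⊆ U := tsupport_mul_subset_right.trans hs
  have hint := integrable_inner_gradient hU hXc hgη hgηc hgηs
  have hint' : Integrable fun x => g x * ⟪X x, gradient η x⟫ := by
    simpa only [Pi.smul_apply', real_inner_smul_left] using
      integrable_inner_gradient hU (hg.continuousOn.smul hXc) hη hc hs
  have hprod : (fun x => η x * ⟪X x, gradient g x⟫) = fun x =>
      ⟪X x, gradient (fun y => g y * η y) x⟫ - g x * ⟪X x, gradient η x⟫ := by
    ext x
    by_cases hx : x ∈ tsupport η
    · rw [gradient_mul ((hg.contDiffAt (hU.mem_nhds (hs hx))).differentiableAt one_ne_zero)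
        (hη.differentiable one_ne_zero x), inner_add_right, real_inner_smul_right,
        real_inner_smul_right]
      ring
    · rw [gradient_eq_zero_of_notMem_tsupport hx,
        gradient_eq_zero_of_notMem_tsupport fun h => hx (tsupport_mul_subset_right h),
        image_eq_zero_of_notMem_tsupport hx]
      simp
  rw [hprod]
  exact ⟨hint.sub hint', by rw [integral_sub hint hint', hX _ hgη hgηc hgηs, zero_sub]⟩

theorem exists_cutoff (n : ℕ) : ∃ C : ℝ, ∀ R : ℝ, 0 < R → ∃ η : En n → ℝ,
    ContDiff ℝ 1 η ∧ HasCompactSupport η ∧ tsupport η ⊆ ball 0 (3 * R) ∧ (∀ x, 0 ≤ η x) ∧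
    (∀ x ∈ closedBall 0 R, η x = 1) ∧ ∫ x, ‖gradient η x‖ ≤ C * (R ^ n / R) := by
  let χ : ContDiffBump (0 : En n) := ⟨1, 2, one_pos, one_lt_two⟩
  refine ⟨∫ x, ‖gradient χ x‖, fun R hR => ?_⟩
  have hsupp : tsupport (fun x => χ (R⁻¹ • x)) ⊆ closedBall 0 (2 * R) := by
    refine closure_minimal (fun x hx => ?_) isClosed_closedBall
    have hball : R⁻¹ • x ∈ ball 0 2 := χ.support_eq.subset hx
    rw [mem_ball_zero_iff, norm_smul, norm_inv, Real.norm_of_nonneg hR.le,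
      inv_mul_lt_iff₀ hR] at hball
    rw [mem_closedBall_zero_iff]
    linarith
  refine ⟨fun x => χ (R⁻¹ • x), χ.contDiff.comp (contDiff_const_smul _),
    HasCompactSupport.of_support_subset_isCompact (isCompact_closedBall 0 (2 * R))
      (subset_closure.trans hsupp),
    hsupp.trans (closedBall_subset_ball (by linarith)), fun x => χ.nonneg, fun x hx => ?_, ?_⟩
  · refine χ.one_of_mem_closedBall ?_
    rw [mem_closedBall_zero_iff] at hx ⊢
    rwa [norm_smul, norm_inv, Real.norm_of_nonneg hR.le, inv_mul_le_iff₀ hR, mul_one]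
  · simp only [gradient_comp_smul, norm_smul, norm_inv, Real.norm_of_nonneg hR.le]
    rw [integral_const_mul, Measure.integral_comp_inv_smul_of_nonneg volume
      (fun x => ‖gradient χ x‖) hR.le, finrank_euclideanSpace_fin, smul_eq_mul]
    exact le_of_eq (by ring)

theorem IsPHarmonicOn.integral_mul_inner_flux_gradient_le {N : MinkowskiNorm n} {p K Λ : ℝ}
    {u : En n → ℝ} (hu : IsPHarmonicOn N p U u) (hp : 1 < p) (hU : IsOpen U)
    (hη : ContDiff ℝ 1 η) (hc : HasCompactSupport η) (hs : tsupport η ⊆ U)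
    (hK : ∀ x ∈ U, |u x| ≤ K) (hΛ : ∀ x ∈ U, ‖N.flux p (gradient u x)‖ ≤ Λ) :
    ∫ x, η x * ⟪N.flux p (gradient u x), gradient u x⟫ ≤ K * Λ * ∫ x, ‖gradient η x‖ := by
  have hbound : ∀ x, ‖u x * ⟪N.flux p (gradient u x), gradient η x⟫‖ ≤
      K * Λ * ‖gradient η x‖ := by
    intro x
    by_cases hx : x ∈ tsupport η
    · rw [norm_mul, mul_assoc]
      refine mul_le_mul (hK x (hs hx)) ((norm_inner_le_norm _ _).trans ?_) (norm_nonneg _)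
        ((abs_nonneg _).trans (hK x (hs hx)))
      gcongr
      exact hΛ x (hs hx)
    · simp only [gradient_eq_zero_of_notMem_tsupport hx, inner_zero_right, mul_zero, norm_zero,
        le_refl]
  rw [(integrable_mul_inner_gradient_and_integral_eq hu.2 hU
    (continuousOn_flux_gradient hp hU hu.1) hη hc hs hu.1).2, ← integral_const_mul]
  exact (neg_le_abs _).trans
    (norm_integral_le_of_norm_le ((integrable_gradient hη hc).norm.const_mul _)
      (Eventually.of_forall hbound))

theorem exists_volume_le_norm_gradient_le (N : MinkowskiNorm n) {p κ : ℝ} (hp : 1 < p) (hκ : 0 < κ)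
    (K L : ℝ) :
    ∃ C : ℝ, ∀ R : ℝ, 0 < R → ∀ V : En n → ℝ, IsPHarmonicOn N p (ball 0 (3 * R)) V →
      (∀ x ∈ ball (0 : En n) (3 * R), |V x| ≤ K) →
      (∀ x ∈ ball (0 : En n) (3 * R), ‖gradient V x‖ ≤ L) →
      volume.real (closedBall (0 : En n) R ∩ {x | κ ≤ ‖gradient V x‖}) ≤ C * (R ^ n / R) := by
  obtain ⟨c, _, hc, _, hN⟩ := N.exists_norm_equiv
  obtain ⟨Λ, hΛ⟩ := (isCompact_closedBall (0 : En n) L).exists_bound_of_continuousOn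
    (N.continuous_flux hp).continuousOn
  obtain ⟨A, hcutoff⟩ := exists_cutoff n
  have hm : 0 < (c * κ) ^ p := by positivity
  refine ⟨K * Λ * A / (c * κ) ^ p, fun R hR V hV hVK hVL => ?_⟩
  obtain ⟨η, hη, hηc, hηs, hη0, hη1, hηint⟩ := hcutoff R hR
  have hint := (integrable_mul_inner_gradient_and_integral_eq hV.2 isOpen_ball
    (continuousOn_flux_gradient hp isOpen_ball hV.1) hη hηc hηs hV.1).1
  have hΛU : ∀ x ∈ ball (0 : En n) (3 * R), ‖N.flux p (gradient V x)‖ ≤ Λ := fun x hx =>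
    hΛ _ (mem_closedBall_zero_iff.2 (hVL x hx))
  have h0 : (0 : En n) ∈ ball 0 (3 * R) := mem_ball_self (by positivity)
  have hKΛ : 0 ≤ K * Λ :=
    mul_nonneg ((abs_nonneg _).trans (hVK 0 h0)) ((norm_nonneg _).trans (hΛU 0 h0))
  have hsub : closedBall (0 : En n) R ∩ {x | κ ≤ ‖gradient V x‖} ⊆
      {x | (c * κ) ^ p ≤ η x * ⟪N.flux p (gradient V x), gradient V x⟫} := by
    rintro x ⟨hxR, hxκ : κ ≤ ‖gradient V x‖⟩
    rw [mem_ofPred_eq, hη1 x hxR, one_mul, N.inner_flux_self hp]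
    exact Real.rpow_le_rpow (by positivity)
      ((mul_le_mul_of_nonneg_left hxκ hc.le).trans (hN _).1) (by linarith)
  rw [div_mul_eq_mul_div, le_div_iff₀ hm, mul_comm]
  have hnonneg : 0 ≤ᵐ[volume] fun x => η x * ⟪N.flux p (gradient V x), gradient V x⟫ :=
    Eventually.of_forall fun x => mul_nonneg (hη0 x)
      (by rw [N.inner_flux_self hp]; exact Real.rpow_nonneg (N.nonneg _) _)
  calc (c * κ) ^ p * volume.real (closedBall (0 : En n) R ∩ {x | κ ≤ ‖gradient V x‖})
      ≤ (c * κ) ^ p *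
        volume.real {x | (c * κ) ^ p ≤ η x * ⟪N.flux p (gradient V x), gradient V x⟫} := by
        gcongr
        exact (hint.measure_ge_lt_top hm).ne
    _ ≤ ∫ x, η x * ⟪N.flux p (gradient V x), gradient V x⟫ :=
        mul_meas_ge_le_integral_of_nonneg hnonneg hint _
    _ ≤ K * Λ * ∫ x, ‖gradient η x‖ :=
        hV.integral_mul_inner_flux_gradient_le hp isOpen_ball hη hηc hηs hVK hΛU
    _ ≤ K * Λ * (A * (R ^ n / R)) := by gcongr
    _ = K * Λ * A * (R ^ n / R) := (mul_assoc _ _ _).symm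

end Caccioppoli

section DeGiorgi

variable {n : ℕ}

theorem exists_mul_volume_rpow_le (hn : 2 ≤ n) :
    ∃ C : ℝ, 0 ≤ C ∧ ∀ ψ : En n → ℝ, ContDiff ℝ 1 ψ → HasCompactSupport ψ → ∀ δ : ℝ, 0 < δ →
      δ * volume.real {x | δ ≤ ψ x} ^ (1 - (n : ℝ)⁻¹) ≤ C * ∫ x, ‖gradient ψ x‖ := by
  have hconj : NNReal.HolderConjugate (Module.finrank ℝ (En n)) (NNReal.conjExponent n) := by
    rw [finrank_euclideanSpace_fin]
    exact NNReal.HolderConjugate.conjExponent (by exact_mod_cast hn)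
  set q := NNReal.conjExponent n
  have hq : 1 - (n : ℝ)⁻¹ = 1 / (q : ℝ) := by
    rw [one_div, ← hconj.coe.one_sub_inv, finrank_euclideanSpace_fin, NNReal.coe_natCast]
  set C₀ := eLpNormLESNormFDerivOneConst (volume : Measure (En n)) q
  refine ⟨C₀, C₀.2, fun ψ hψ hc δ hδ => ?_⟩
  have hq0 : 0 < q := hconj.symm.pos
  have hsub : {x | δ ≤ ψ x} ⊆ {x | ENNReal.ofReal δ ≤ ‖ψ x‖ₑ} := fun x hx => by
    rw [mem_ofPred_eq, Real.enorm_eq_ofReal_abs]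
    exact ENNReal.ofReal_le_ofReal (le_trans hx (le_abs_self _))
  have hweak : ENNReal.ofReal δ * volume {x | δ ≤ ψ x} ^ (1 / (q : ℝ)) ≤
      C₀ * ∫⁻ x, ‖fderiv ℝ ψ x‖ₑ := by
    have hcheb := mul_meas_ge_le_pow_eLpNorm' volume (ENNReal.coe_ne_zero.2 hq0.ne')
      ENNReal.coe_ne_top hψ.continuous.aestronglyMeasurable (ENNReal.ofReal δ)
    have hroot := ENNReal.rpow_le_rpow hcheb (one_div_nonneg.2 q.coe_nonneg)
    rw [ENNReal.mul_rpow_of_nonneg _ _ (one_div_nonneg.2 q.coe_nonneg), ENNReal.coe_toReal,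
      ← ENNReal.rpow_mul, ← ENNReal.rpow_mul, mul_one_div_cancel (NNReal.coe_ne_zero.2 hq0.ne'),
      ENNReal.rpow_one, ENNReal.rpow_one] at hroot
    calc ENNReal.ofReal δ * volume {x | δ ≤ ψ x} ^ (1 / (q : ℝ))
        ≤ ENNReal.ofReal δ * volume {x | ENNReal.ofReal δ ≤ ‖ψ x‖ₑ} ^ (1 / (q : ℝ)) := by gcongr
      _ ≤ eLpNorm ψ q volume := hroot
      _ ≤ C₀ * ∫⁻ x, ‖fderiv ℝ ψ x‖ₑ := by
        rw [← eLpNorm_one_eq_lintegral_enorm]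
        exact eLpNorm_le_eLpNorm_fderiv_one volume hψ hc hconj
  have hint : Integrable (fderiv ℝ ψ) :=
    (hψ.continuous_fderiv one_ne_zero).integrable_of_hasCompactSupport (hc.fderiv ℝ)
  simp only [norm_gradient]
  rw [← ofReal_integral_norm_eq_lintegral_enorm hint] at hweak
  have := ENNReal.toReal_mono (by finiteness) hweak
  rwa [ENNReal.toReal_mul, ENNReal.toReal_mul, ENNReal.toReal_ofReal hδ.le,
    ← ENNReal.toReal_rpow, ENNReal.toReal_ofReal (integral_nonneg fun x => norm_nonneg _),
    ENNReal.coe_toReal, ← hq] at this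

theorem le_mul_pow_of_rpow_succ_le {b : ℕ → ℝ} (hb : ∀ j, 0 ≤ b j) {A r θ : ℝ} (hA : 0 ≤ A)
    (hr : 0 < r) (hθ : 0 < θ) (hθ1 : θ ≤ 1)
    (h : ∀ j, b (j + 1) ^ θ ≤ A * (r ^ (θ - 1)) ^ j * b j) (hsmall : A * b 0 ^ (1 - θ) ≤ r ^ θ)
    (j : ℕ) : b j ≤ b 0 * r ^ j := by
  induction j with
  | zero => rw [pow_zero, mul_one]
  | succ j ih =>
    have hsplit : b 0 = b 0 ^ (1 - θ) * b 0 ^ θ := by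
      rw [← Real.rpow_add_of_nonneg (hb 0) (sub_nonneg.2 hθ1) hθ.le, sub_add_cancel,
        Real.rpow_one]
    have hrj : (r ^ (θ - 1)) ^ j * r ^ j = (r ^ θ) ^ j := by
      rw [← mul_pow, Real.rpow_sub_one hr.ne', div_mul_cancel₀ _ hr.ne']
    refine (Real.rpow_le_rpow_iff (hb _) (by have := hb 0; positivity) hθ).1 ?_
    calc b (j + 1) ^ θ ≤ A * (r ^ (θ - 1)) ^ j * b j := h j
      _ ≤ A * (r ^ (θ - 1)) ^ j * (b 0 * r ^ j) := by gcongr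
      _ = A * b 0 * (r ^ θ) ^ j := by rw [← hrj]; ring
      _ = A * b 0 ^ (1 - θ) * (b 0 ^ θ * (r ^ θ) ^ j) := by
        conv_lhs => rw [hsplit]
        ring
      _ ≤ r ^ θ * (b 0 ^ θ * (r ^ θ) ^ j) := by have := hb 0; gcongr
      _ = (b 0 * r ^ (j + 1)) ^ θ := by
        rw [Real.mul_rpow (hb 0) (by positivity), ← Real.rpow_pow_comm hr.le, pow_succ]
        ring

theorem eq_zero_of_sq_mul_rpow_le {a : ℝ → ℝ} (ha : AntitoneOn a (Ici 0))
    (ha0 : ∀ k, 0 ≤ a k) {θ M κ : ℝ} (hθ0 : 0 < θ) (hθ1 : θ < 1) (hκ : 0 < κ) (hM : 0 ≤ M)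
    (h : ∀ k l, 0 ≤ k → k < l → (l - k) ^ 2 * a l ^ θ ≤ M * a k)
    (hsmall : 4 * M * a 0 ^ (1 - θ) ≤ κ ^ 2 * (1 / 4 : ℝ) ^ (θ / (1 - θ))) : a κ = 0 := by
  have hθ' : 0 < 1 - θ := sub_pos.2 hθ1
  set r : ℝ := (1 / 4 : ℝ) ^ (1 - θ)⁻¹ with hr
  have hr0 : 0 < r := by positivity
  have hr1 : r < 1 := Real.rpow_lt_one (by norm_num) (by norm_num) (inv_pos.2 hθ')
  have hrθ : r ^ (θ - 1) = 4 := by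
    rw [← neg_sub, Real.rpow_neg hr0.le, hr, Real.rpow_inv_rpow (by norm_num) hθ'.ne']
    norm_num
  let k : ℕ → ℝ := fun j => κ * (1 - (1 / 2) ^ j)
  have hk0 : k 0 = 0 := by simp only [k, pow_zero, sub_self, mul_zero]
  have hk : ∀ j, 0 ≤ k j := fun j =>
    mul_nonneg hκ.le (sub_nonneg.2 (pow_le_one₀ (by norm_num) (by norm_num)))
  have hstep : ∀ j, a (k (j + 1)) ^ θ ≤ 4 * M / κ ^ 2 * (r ^ (θ - 1)) ^ j * a (k j) := by
    intro j
    have hdiff : k (j + 1) - k j = κ / 2 * (1 / 2) ^ j := by simp only [k]; ring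
    have hlt : k j < k (j + 1) := sub_pos.1 (hdiff ▸ by positivity)
    have hjk := h (k j) (k (j + 1)) (hk j) hlt
    rw [hdiff, ← le_div_iff₀' (by positivity)] at hjk
    refine hjk.trans_eq ?_
    rw [hrθ, mul_pow, div_pow, ← pow_mul, mul_comm j, pow_mul, one_div_pow, one_div_pow]
    norm_num
    field_simp
  have hdecay : ∀ j, a κ ≤ a 0 * r ^ j := fun j => by
    rw [← hk0]
    refine (ha (hk j) hκ.le ?_).trans (le_mul_pow_of_rpow_succ_le (fun j => ha0 (k j))
      (by positivity) hr0 hθ0 hθ1.le hstep ?_ j)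
    · exact mul_le_of_le_one_right hκ.le (sub_le_self _ (by positivity))
    · rwa [hk0, hr, ← Real.rpow_mul (by norm_num), inv_mul_eq_div, div_mul_eq_mul_div,
        div_le_iff₀' (by positivity)]
  have hlim : Tendsto (fun j : ℕ => a 0 * r ^ j) atTop (𝓝 0) := by
    simpa only [mul_zero] using (tendsto_pow_atTop_nhds_zero_of_lt_one hr0.le hr1).const_mul (a 0)
  exact (ge_of_tendsto' hlim hdecay).antisymm (ha0 κ)

/-- The setting of the De Giorgi iteration: the weakly divergence-free field `X` controls `∇z` on
the set `{z > 0}` up to the error `A`, and this set is contained in the compact set `K`. -/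
structure IsDeGiorgiPair (X : En n → En n) (z : En n → ℝ) (U K : Set (En n)) (A L μ : ℝ) :
    Prop where
  isWeaklyDivFreeOn : IsWeaklyDivFreeOn X U
  isOpen : IsOpen U
  continuousOn : ContinuousOn X U
  contDiffOn : ContDiffOn ℝ 1 z U
  isCompact : IsCompact K
  subset : K ⊆ U
  nonpos : ∀ x ∈ U \ K, z x ≤ 0
  le : ∀ x ∈ U, z x ≤ L
  nonneg : 0 ≤ A
  pos : 0 < μ
  elliptic : ∀ x ∈ U, 0 < z x → μ * (‖gradient z x‖ - A) ≤ ⟪X x, gradient z x⟫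

namespace IsDeGiorgiPair

variable {X : En n → En n} {U K : Set (En n)} {z : En n → ℝ} {A L μ k : ℝ}

theorem sub_const (h : IsDeGiorgiPair X z U K A L μ) (hk : 0 ≤ k) :
    IsDeGiorgiPair X (fun x => z x - k) U K A L μ where
  __ := h
  contDiffOn := h.contDiffOn.sub contDiffOn_const
  nonpos x hx := (sub_le_self _ hk).trans (h.nonpos x hx)
  le x hx := (sub_le_self _ hk).trans (h.le x hx)
  elliptic x hx hzx := by
    simpa only [sub_eq_add_neg, gradient_add_const] using
      h.elliptic x hx (hk.trans_lt (sub_pos.1 hzx))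

theorem volume_ne_top (h : IsDeGiorgiPair X z U K A L μ) (hk : 0 ≤ k) :
    volume (U ∩ {x | k < z x}) ≠ ⊤ := by
  have hsub : U ∩ {x | k < z x} ⊆ K := fun x hx =>
    by_contra fun hxK => (hk.trans_lt hx.2).not_ge (h.nonpos x ⟨hx.1, hxK⟩)
  exact ((measure_mono hsub).trans_lt h.isCompact.measure_lt_top).ne

theorem isOpen_inter_lt (h : IsDeGiorgiPair X z U K A L μ) (k : ℝ) :
    IsOpen (U ∩ {x | k < z x}) :=
  h.contDiffOn.continuousOn.isOpen_inter_preimage h.isOpen isOpen_Ioi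

theorem contDiff_truncSq (h : IsDeGiorgiPair X z U K A L μ) : ContDiff ℝ 1 (truncSq U z) :=
  _root_.contDiff_truncSq h.isOpen h.contDiffOn h.isCompact.isClosed h.subset h.nonpos

theorem tsupport_truncSq_subset (h : IsDeGiorgiPair X z U K A L μ) : tsupport (truncSq U z) ⊆ K :=
  _root_.tsupport_truncSq_subset h.isCompact.isClosed h.nonpos

theorem hasCompactSupport_truncSq (h : IsDeGiorgiPair X z U K A L μ) :
    HasCompactSupport (truncSq U z) :=
  h.isCompact.of_isClosed_subset (isClosed_tsupport _) h.tsupport_truncSq_subset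

theorem integral_norm_gradient_truncSq_le (h : IsDeGiorgiPair X z U K A L μ) :
    ∫ x, ‖gradient (truncSq U z) x‖ ≤ 2 * A * L * volume.real (U ∩ {x | 0 < z x}) := by
  set S := U ∩ {x | 0 < z x}
  have hSm : MeasurableSet S := (h.isOpen_inter_lt 0).measurableSet
  have hsupp : tsupport (truncSq U z) ⊆ U := h.tsupport_truncSq_subset.trans h.subset
  have hpointwise : ∀ x, μ * (‖gradient (truncSq U z) x‖ - S.indicator (fun _ => 2 * A * L) x) ≤
      ⟪X x, gradient (truncSq U z) x⟫ := by
    intro x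
    by_cases hx : x ∈ S
    · have hzx : 0 < z x := hx.2
      have hAL : z x * A ≤ L * A := mul_le_mul_of_nonneg_right (h.le x hx.1) h.nonneg
      rw [indicator_of_mem hx, gradient_truncSq h.isOpen h.contDiffOn hx.1, max_eq_left hzx.le,
        norm_smul, real_inner_smul_right, Real.norm_of_nonneg (by positivity)]
      calc μ * (2 * z x * ‖gradient z x‖ - 2 * A * L)
          ≤ μ * (2 * z x * ‖gradient z x‖ - 2 * z x * A) :=
            mul_le_mul_of_nonneg_left (by linarith) h.pos.le
        _ = 2 * z x * (μ * (‖gradient z x‖ - A)) := by ring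
        _ ≤ 2 * z x * ⟪X x, gradient z x⟫ := by gcongr; exact h.elliptic x hx.1 hzx
    · rw [indicator_of_notMem hx, gradient_truncSq_eq_zero h.isOpen h.contDiffOn hsupp hx,
        norm_zero, sub_zero, mul_zero, inner_zero_right]
  have hint := (integrable_gradient h.contDiff_truncSq h.hasCompactSupport_truncSq).norm
  have hint' : Integrable (S.indicator fun _ => 2 * A * L) :=
    (integrable_indicator_iff hSm).2 (integrableOn_const (h.volume_ne_top le_rfl))
  have hmono := integral_mono ((hint.sub hint').const_mul μ)
    (integrable_inner_gradient h.isOpen h.continuousOn h.contDiff_truncSq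
      h.hasCompactSupport_truncSq hsupp) hpointwise
  simp only [Pi.sub_apply] at hmono
  rw [h.isWeaklyDivFreeOn _ h.contDiff_truncSq h.hasCompactSupport_truncSq hsupp,
    integral_const_mul, integral_sub hint hint', integral_indicator_const _ hSm,
    smul_eq_mul, mul_comm (volume.real S)] at hmono
  exact sub_nonpos.1 (nonpos_of_mul_nonpos_right hmono h.pos)

theorem exists_sq_mul_volume_rpow_le (hn : 2 ≤ n) :
    ∃ C : ℝ, 0 ≤ C ∧ ∀ {X : En n → En n} {z : En n → ℝ} {U K : Set (En n)} {A L μ : ℝ},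
      IsDeGiorgiPair X z U K A L μ → ∀ l, 0 < l →
        l ^ 2 * volume.real (U ∩ {x | l < z x}) ^ (1 - (n : ℝ)⁻¹) ≤
          C * A * L * volume.real (U ∩ {x | 0 < z x}) := by
  obtain ⟨C, hC, hsob⟩ := exists_mul_volume_rpow_le hn
  refine ⟨2 * C, by positivity, fun {X z U K A L μ} h l hl => ?_⟩
  have hsub : U ∩ {x | l < z x} ⊆ {x | l ^ 2 ≤ truncSq U z x} := by
    rintro x ⟨hxU, hx : l < z x⟩
    rw [mem_ofPred_eq, truncSq, indicator_of_mem hxU]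
    exact pow_le_pow_left₀ hl.le (hx.le.trans (le_max_left _ _)) 2
  have hsubK : {x | l ^ 2 ≤ truncSq U z x} ⊆ K := fun x hx =>
    h.tsupport_truncSq_subset (subset_tsupport _ (((pow_pos hl 2).trans_le hx).ne'))
  have hfin : volume {x | l ^ 2 ≤ truncSq U z x} ≠ ⊤ :=
    ((measure_mono hsubK).trans_lt h.isCompact.measure_lt_top).ne
  have hn' : 0 ≤ 1 - (n : ℝ)⁻¹ := sub_nonneg.2 (Nat.cast_inv_le_one n)
  calc l ^ 2 * volume.real (U ∩ {x | l < z x}) ^ (1 - (n : ℝ)⁻¹)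
      ≤ l ^ 2 * volume.real {x | l ^ 2 ≤ truncSq U z x} ^ (1 - (n : ℝ)⁻¹) := by gcongr
    _ ≤ C * ∫ x, ‖gradient (truncSq U z) x‖ :=
        hsob _ h.contDiff_truncSq h.hasCompactSupport_truncSq _ (by positivity)
    _ ≤ C * (2 * A * L * volume.real (U ∩ {x | 0 < z x})) := by
        gcongr
        exact h.integral_norm_gradient_truncSq_le
    _ = 2 * C * A * L * volume.real (U ∩ {x | 0 < z x}) := by ring

theorem exists_le_of_volume_rpow_le (hn : 2 ≤ n) :
    ∃ C : ℝ, 0 ≤ C ∧ ∀ {X : En n → En n} {z : En n → ℝ} {U K : Set (En n)} {A L μ κ : ℝ},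
      IsDeGiorgiPair X z U K A L μ → 0 ≤ L → 0 < κ →
      C * A * L * volume.real (U ∩ {x | 0 < z x}) ^ (n : ℝ)⁻¹ ≤ κ ^ 2 → ∀ x ∈ U, z x ≤ κ := by
  obtain ⟨C, hC, hlevel⟩ := exists_sq_mul_volume_rpow_le hn
  have hn0 : (n : ℝ)⁻¹ < 1 := inv_lt_one_of_one_lt₀ (by exact_mod_cast hn)
  have hn1 : 0 < (n : ℝ)⁻¹ := by positivity
  set θ : ℝ := 1 - (n : ℝ)⁻¹
  have hθ : 1 - θ = (n : ℝ)⁻¹ := sub_sub_cancel 1 _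
  have hr : 0 < (1 / 4 : ℝ) ^ (θ / (1 - θ)) := by positivity
  refine ⟨4 * C / (1 / 4 : ℝ) ^ (θ / (1 - θ)), by positivity, fun {X z U K A L μ κ} h hL hκ hsmall
    x hx => ?_⟩
  have hA := h.nonneg
  have hzero := eq_zero_of_sq_mul_rpow_le (a := fun k => volume.real (U ∩ {x | k < z x}))
    (fun k hk l _ hkl => measureReal_mono
      (inter_subset_inter_right _ fun x hx => hkl.trans_lt hx) (h.volume_ne_top hk))
    (fun _ => measureReal_nonneg) (sub_pos.2 hn0) (sub_lt_self 1 hn1) hκ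
    (M := C * A * L) (by positivity)
    (fun k l hk hkl => by
      simpa only [sub_lt_sub_iff_right, sub_pos] using
        hlevel (h.sub_const hk) (l - k) (sub_pos.2 hkl))
    (by
      rw [← hθ] at hsmall
      rw [← div_le_iff₀ hr]
      refine le_of_eq_of_le ?_ hsmall
      ring)
  have hempty := (h.isOpen_inter_lt κ).eq_empty_of_measure_zero
    ((measureReal_eq_zero_iff (h.volume_ne_top hκ.le)).1 hzero)
  exact not_lt.1 fun hlt => eq_empty_iff_forall_notMem.1 hempty x ⟨hx, hlt⟩

end IsDeGiorgiPair

end DeGiorgi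

section QuotientBarrier

variable {E : Type*} [NormedAddCommGroup E] [InnerProductSpace ℝ E] {V : E → ℝ} {e x : E}
  {s κ b : ℝ}

theorem mul_norm_sub_sub_le_inner {D y q : E} {lam Lam ρ : ℝ} (hlam : 0 < lam) (hLam : 0 ≤ Lam)
    (hlower : lam * ‖y‖ ^ 2 ≤ ⟪D, y⟫) (hupper : ‖D‖ ≤ Lam * ‖y‖) (hq : ‖q‖ ≤ ρ) :
    Lam * ρ * (‖y - q‖ - (1 + Lam / lam) * ρ) ≤ ⟪D, y - q⟫ := by
  have hρ : 0 ≤ ρ := (norm_nonneg q).trans hq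
  have htriangle : ‖y - q‖ ≤ ‖y‖ + ρ := (norm_sub_le y q).trans (by gcongr)
  have hcross : ⟪D, q⟫ ≤ Lam * ‖y‖ * ρ := (real_inner_le_norm D q).trans (by gcongr)
  have hsquare : 0 ≤ lam * (‖y‖ - Lam * ρ / lam) ^ 2 := by positivity
  calc Lam * ρ * (‖y - q‖ - (1 + Lam / lam) * ρ)
      ≤ Lam * ρ * (‖y‖ + ρ - (1 + Lam / lam) * ρ) := by gcongr
    _ = lam * ‖y‖ ^ 2 - Lam * ‖y‖ * ρ - lam * (‖y‖ - Lam * ρ / lam) ^ 2 := by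
      field_simp
      ring
    _ ≤ ⟪D, y⟫ - ⟪D, q⟫ := by linarith
    _ = ⟪D, y - q⟫ := (inner_sub_right _ _ _).symm

/-- The difference quotient of `V` with step `s • e`, lowered by `κ` and by a quadratic barrier. -/
def quotientBarrier (V : E → ℝ) (e : E) (s κ b : ℝ) (x : E) : ℝ :=
  (V (x + s • e) - V x) / s - κ - b * ‖x‖ ^ 2

theorem quotientBarrier_zero (V : E → ℝ) (e : E) (s κ b : ℝ) :
    quotientBarrier V e s κ b 0 = (V (0 + s • e) - V 0) / s - κ := by
  rw [quotientBarrier, norm_zero, zero_pow two_ne_zero, mul_zero, sub_zero]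

theorem contDiffOn_quotientBarrier {U W : Set E} (hV : ContDiffOn ℝ 1 V W) (hU : U ⊆ W)
    (hs : ∀ x ∈ U, x + s • e ∈ W) : ContDiffOn ℝ 1 (quotientBarrier V e s κ b) U :=
  (((((hV.comp (contDiff_id.add contDiff_const).contDiffOn hs).sub (hV.mono hU)).div_const s).sub
    contDiffOn_const).sub (contDiff_const.mul (contDiff_norm_sq ℝ)).contDiffOn)

variable [CompleteSpace E]

theorem gradient_quotientBarrier (hx : DifferentiableAt ℝ V x)
    (hxs : DifferentiableAt ℝ V (x + s • e)) :
    gradient (quotientBarrier V e s κ b) x =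
      s⁻¹ • (gradient V (x + s • e) - gradient V x) - (2 * b) • x := by
  have hshift : HasFDerivAt (fun y => V (y + s • e)) (fderiv ℝ V (x + s • e)) x :=
    (hasFDerivAt_comp_add_right (s • e)).2 hxs.hasFDerivAt
  have hsq := (hasStrictFDerivAt_norm_sq x).hasFDerivAt.const_mul b
  refine gradient_eq_of_hasFDerivAt
    ((((hshift.sub hx.hasFDerivAt).mul_const s⁻¹).sub_const κ).sub hsq) fun w => ?_
  simp only [_root_.sub_apply, _root_.smul_apply, smul_eq_mul, coe_innerSL_apply, nsmul_eq_mul,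
    Nat.cast_ofNat, inner_sub_left, real_inner_smul_left, inner_gradient_left]
  ring

theorem le_inner_gradient_of_lt_slope (he : ‖e‖ = 1) (hs : 0 < s)
    (hd : ∀ y ∈ closedBall x s, DifferentiableAt ℝ V y)
    (hosc : ∀ y ∈ closedBall x s, ‖gradient V y - gradient V x‖ ≤ κ / 4)
    (hκ : κ < (V (x + s • e) - V x) / s) :
    κ / 2 ≤ ⟪e, gradient V x⟫ ∧ κ / 2 ≤ ⟪e, gradient V (x + s • e)⟫ := by
  have hmem : x + s • e ∈ closedBall x s := by
    rw [mem_closedBall, dist_self_add_left, norm_smul, he, mul_one, Real.norm_of_nonneg hs.le]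
  have hlin : |V (x + s • e) - V x - s * ⟪gradient V x, e⟫| ≤ κ / 4 * s := by
    have h := (convex_closedBall x s).norm_image_sub_le_of_norm_fderiv_le' hd
      (fun y hy => norm_gradient_sub_gradient V V y x ▸ hosc y hy) (mem_closedBall_self hs.le) hmem
    rwa [add_sub_cancel_left, map_smul, ← inner_gradient_left, smul_eq_mul, Real.norm_eq_abs,
      norm_smul, he, mul_one, Real.norm_of_nonneg hs.le] at h
  have hx : 3 * κ / 4 ≤ ⟪gradient V x, e⟫ := by
    rw [lt_div_iff₀ hs] at hκ
    refine le_of_mul_le_mul_left ?_ hs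
    linarith [(abs_le.1 hlin).2]
  have hdiff : |⟪gradient V (x + s • e) - gradient V x, e⟫| ≤ κ / 4 := by
    refine (abs_real_inner_le_norm _ _).trans ?_
    rw [he, mul_one]
    exact hosc _ hmem
  have hκ0 : 0 ≤ κ / 4 := (abs_nonneg _).trans hdiff
  rw [inner_sub_left] at hdiff
  rw [real_inner_comm, real_inner_comm _ e]
  constructor <;> linarith [(abs_le.1 hdiff).1]

end QuotientBarrier

section DifferenceQuotient

variable {n : ℕ} {N : MinkowskiNorm n} {p R L κ s : ℝ} {V : En n → ℝ} {e x : En n}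

/-- A `p`-harmonic function `V` on the ball of radius `3R` whose gradient is bounded by `L`,
together with a step `s • e` so short that `∇V` oscillates by at most `κ / 4` over it. -/
structure IsShortStep (N : MinkowskiNorm n) (p R L κ : ℝ) (V : En n → ℝ) (e : En n) (s : ℝ) :
    Prop where
  isPHarmonicOn : IsPHarmonicOn N p (ball 0 (3 * R)) V
  norm_gradient_le : ∀ x ∈ ball (0 : En n) (3 * R), ‖gradient V x‖ ≤ L
  norm_eq_one : ‖e‖ = 1
  pos : 0 < s
  le : s ≤ R
  oscillation_le : ∀ x ∈ closedBall (0 : En n) R, ∀ y ∈ closedBall x s,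
    ‖gradient V y - gradient V x‖ ≤ κ / 4

namespace IsShortStep

theorem closedBall_subset (h : IsShortStep N p R L κ V e s) (hx : x ∈ ball 0 (2 * R)) :
    closedBall x s ⊆ ball 0 (3 * R) := by
  refine closedBall_subset_ball' ?_
  linarith [mem_ball.1 hx, h.le]

theorem add_mem_closedBall (h : IsShortStep N p R L κ V e s) (x : En n) :
    x + s • e ∈ closedBall x s := by
  rw [mem_closedBall, dist_self_add_left, norm_smul, h.norm_eq_one, mul_one,
    Real.norm_of_nonneg h.pos.le]

theorem add_mem_ball (h : IsShortStep N p R L κ V e s) (hx : x ∈ ball 0 (2 * R)) :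
    x + s • e ∈ ball 0 (3 * R) :=
  h.closedBall_subset hx (h.add_mem_closedBall x)

theorem mem_ball (h : IsShortStep N p R L κ V e s) (hx : x ∈ ball 0 (2 * R)) :
    x ∈ ball 0 (3 * R) :=
  h.closedBall_subset hx (mem_closedBall_self h.pos.le)

theorem differentiableAt (h : IsShortStep N p R L κ V e s) (hx : x ∈ ball 0 (3 * R)) :
    DifferentiableAt ℝ V x :=
  h.isPHarmonicOn.differentiableAt isOpen_ball hx

theorem slope_le (h : IsShortStep N p R L κ V e s) (hx : x ∈ ball 0 (2 * R)) :
    (V (x + s • e) - V x) / s ≤ L := by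
  have hmean := abs_sub_le_of_norm_gradient_le (convex_ball 0 (3 * R))
    (fun y hy => h.differentiableAt hy) h.norm_gradient_le (h.mem_ball hx) (h.add_mem_ball hx)
  rw [add_sub_cancel_left, norm_smul, h.norm_eq_one, mul_one, Real.norm_of_nonneg h.pos.le]
    at hmean
  exact (div_le_iff₀ h.pos).2 ((le_abs_self _).trans hmean)

theorem quotientBarrier_nonpos (h : IsShortStep N p R L κ V e s) (hR : 0 < R) (hL : 0 ≤ L)
    (hκ : 0 < κ) (hx : x ∈ ball 0 (2 * R) \ closedBall 0 R) :
    quotientBarrier V e s κ (L / R ^ 2) x ≤ 0 := by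
  have hRx : R ≤ ‖x‖ := (mem_compl_closedBall_zero_iff.1 hx.2).le
  have hbarrier : L ≤ L / R ^ 2 * ‖x‖ ^ 2 := by
    rw [div_mul_eq_mul_div, le_div_iff₀ (by positivity)]
    gcongr
  linarith [h.slope_le hx.1, quotientBarrier.eq_1 V e s κ (L / R ^ 2) x]

theorem quotientBarrier_le (h : IsShortStep N p R L κ V e s) (hL : 0 ≤ L) (hκ : 0 < κ)
    (hx : x ∈ ball 0 (2 * R)) : quotientBarrier V e s κ (L / R ^ 2) x ≤ L := by
  have hbarrier : 0 ≤ L / R ^ 2 * ‖x‖ ^ 2 := by positivity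
  linarith [h.slope_le hx, quotientBarrier.eq_1 V e s κ (L / R ^ 2) x]

theorem mem_closedBall_of_pos (h : IsShortStep N p R L κ V e s) (hR : 0 < R) (hL : 0 ≤ L)
    (hκ : 0 < κ) (hx : x ∈ ball 0 (2 * R)) (hz : 0 < quotientBarrier V e s κ (L / R ^ 2) x) :
    x ∈ closedBall 0 R :=
  by_contra fun hxR => hz.not_ge (h.quotientBarrier_nonpos hR hL hκ ⟨hx, hxR⟩)

theorem le_inner_gradient (h : IsShortStep N p R L κ V e s) (hR : 0 < R) (hL : 0 ≤ L)
    (hκ : 0 < κ) (hx : x ∈ ball 0 (2 * R)) (hz : 0 < quotientBarrier V e s κ (L / R ^ 2) x) :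
    κ / 2 ≤ ⟪e, gradient V x⟫ ∧ κ / 2 ≤ ⟪e, gradient V (x + s • e)⟫ := by
  have hbarrier : 0 ≤ L / R ^ 2 * ‖x‖ ^ 2 := by positivity
  refine le_inner_gradient_of_lt_slope h.norm_eq_one h.pos
    (fun y hy => h.differentiableAt (h.closedBall_subset hx hy))
    (h.oscillation_le x (h.mem_closedBall_of_pos hR hL hκ hx hz)) ?_
  linarith [quotientBarrier.eq_1 V e s κ (L / R ^ 2) x]

theorem half_le_norm_gradient (h : IsShortStep N p R L κ V e s) (hR : 0 < R) (hL : 0 ≤ L)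
    (hκ : 0 < κ) (hx : x ∈ ball 0 (2 * R)) (hz : 0 < quotientBarrier V e s κ (L / R ^ 2) x) :
    κ / 2 ≤ ‖gradient V x‖ := by
  simpa only [h.norm_eq_one, one_mul] using
    (h.le_inner_gradient hR hL hκ hx hz).1.trans (real_inner_le_norm e (gradient V x))

end IsShortStep

/-- The difference quotient of the flux `F(∇V)^{p-1} F_ξ(∇V)` with step `s • e`. -/
def fluxQuotient (N : MinkowskiNorm n) (p : ℝ) (V : En n → ℝ) (e : En n) (s : ℝ) (x : En n) :
    En n :=
  s⁻¹ • (N.flux p (gradient V (x + s • e)) - N.flux p (gradient V x))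

namespace IsShortStep

theorem exists_le_inner_fluxQuotient (N : MinkowskiNorm n) (hp : 1 < p) (hL : 0 < L) (hκ : 0 < κ) :
    ∃ A μ : ℝ, 0 < A ∧ 0 < μ ∧ ∀ {R V e s}, 0 < R → IsShortStep N p R L κ V e s →
      ∀ x ∈ ball (0 : En n) (2 * R), 0 < quotientBarrier V e s κ (L / R ^ 2) x →
        μ / R * (‖gradient (quotientBarrier V e s κ (L / R ^ 2)) x‖ - A / R) ≤
          ⟪fluxQuotient N p V e s x, gradient (quotientBarrier V e s κ (L / R ^ 2)) x⟫ := by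
  obtain ⟨lam, Lam, hlam, hLam, hflux⟩ := N.exists_flux_bounds hp (R := L) (half_pos hκ)
  refine ⟨(1 + Lam / lam) * (2 * L), Lam * (2 * L), by positivity, by positivity,
    fun {R V e s} hR h x hx hz => ?_⟩
  obtain ⟨hdir, hdir'⟩ := h.le_inner_gradient hR hL.le hκ hx hz
  obtain ⟨hlower, hupper⟩ := hflux e _ _ h.norm_eq_one hdir' hdir
    (h.norm_gradient_le _ (h.add_mem_ball hx)) (h.norm_gradient_le _ (h.mem_ball hx))
  rw [gradient_quotientBarrier (h.differentiableAt (h.mem_ball hx))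
    (h.differentiableAt (h.add_mem_ball hx)), fluxQuotient]
  set ω := gradient V (x + s • e) - gradient V x
  set D := N.flux p (gradient V (x + s • e)) - N.flux p (gradient V x)
  have hs : ‖s⁻¹‖ = s⁻¹ := Real.norm_of_nonneg (inv_pos.2 h.pos).le
  have hlower' : lam * ‖s⁻¹ • ω‖ ^ 2 ≤ ⟪s⁻¹ • D, s⁻¹ • ω⟫ := by
    rw [norm_smul, mul_pow, hs, real_inner_smul_left, real_inner_smul_right]
    nlinarith [mul_le_mul_of_nonneg_left hlower (sq_nonneg s⁻¹)]
  have hupper' : ‖s⁻¹ • D‖ ≤ Lam * ‖s⁻¹ • ω‖ := by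
    rw [norm_smul, norm_smul, mul_left_comm]
    gcongr
  have hbarrier : ‖(2 * (L / R ^ 2)) • x‖ ≤ 2 * L / R := by
    have hxR := mem_closedBall_zero_iff.1 (h.mem_closedBall_of_pos hR hL.le hκ hx hz)
    rw [norm_smul, Real.norm_of_nonneg (by positivity)]
    calc 2 * (L / R ^ 2) * ‖x‖ ≤ 2 * (L / R ^ 2) * R := by gcongr
      _ = 2 * L / R := by field_simp
  simpa only [mul_div_assoc] using mul_norm_sub_sub_le_inner hlam hLam.le hlower' hupper' hbarrier

theorem continuousOn_flux (h : IsShortStep N p R L κ V e s) (hp : 1 < p) :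
    ContinuousOn (fun x => N.flux p (gradient V x)) (ball 0 (3 * R)) :=
  continuousOn_flux_gradient hp isOpen_ball h.isPHarmonicOn.1

theorem continuousOn_flux_add (h : IsShortStep N p R L κ V e s) (hp : 1 < p) :
    ContinuousOn (fun x => N.flux p (gradient V (x + s • e))) (ball 0 (2 * R)) :=
  (h.continuousOn_flux hp).comp (continuous_add_const _).continuousOn fun _ => h.add_mem_ball

theorem isWeaklyDivFreeOn_fluxQuotient (h : IsShortStep N p R L κ V e s) (hp : 1 < p) :
    IsWeaklyDivFreeOn (fluxQuotient N p V e s) (ball 0 (2 * R)) :=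
  (((h.isPHarmonicOn.2.comp_add_right (s • e)).mono fun _ => h.add_mem_ball).sub
    (h.isPHarmonicOn.2.mono fun _ => h.mem_ball) isOpen_ball (h.continuousOn_flux_add hp)
    ((h.continuousOn_flux hp).mono fun _ => h.mem_ball)).const_smul s⁻¹

theorem exists_isDeGiorgiPair (N : MinkowskiNorm n) (hp : 1 < p) (hL : 0 < L) (hκ : 0 < κ) :
    ∃ A μ : ℝ, 0 < A ∧ ∀ {R V e s}, 0 < R → IsShortStep N p R L κ V e s →
      IsDeGiorgiPair (fluxQuotient N p V e s) (quotientBarrier V e s κ (L / R ^ 2))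
        (ball 0 (2 * R)) (closedBall 0 R) (A / R) L (μ / R) := by
  obtain ⟨A, μ, hA, hμ, hell⟩ := exists_le_inner_fluxQuotient N hp hL hκ
  exact ⟨A, μ, hA, fun {R V e s} hR h =>
    { isWeaklyDivFreeOn := h.isWeaklyDivFreeOn_fluxQuotient hp
      isOpen := isOpen_ball
      continuousOn := ((h.continuousOn_flux_add hp).sub
        ((h.continuousOn_flux hp).mono fun _ => h.mem_ball)).const_smul s⁻¹
      contDiffOn := contDiffOn_quotientBarrier h.isPHarmonicOn.1 (fun _ => h.mem_ball)
        fun _ => h.add_mem_ball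
      isCompact := isCompact_closedBall 0 R
      subset := closedBall_subset_ball (by linarith)
      nonpos := fun x hx => h.quotientBarrier_nonpos hR hL.le hκ hx
      le := fun x hx => h.quotientBarrier_le hL.le hκ hx
      nonneg := by positivity
      pos := by positivity
      elliptic := hell hR h }⟩

end IsShortStep

theorem IsPHarmonicOn.eventually_isShortStep (hV : IsPHarmonicOn N p (ball 0 (3 * R)) V)
    (hR : 0 < R) (hκ : 0 < κ) (hVL : ∀ x ∈ ball (0 : En n) (3 * R), ‖gradient V x‖ ≤ L)
    (he : ‖e‖ = 1) : ∀ᶠ s in 𝓝[>] 0, IsShortStep N p R L κ V e s := by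
  have hsub : closedBall (0 : En n) (2 * R) ⊆ ball 0 (3 * R) :=
    closedBall_subset_ball (by linarith)
  obtain ⟨δ, hδ, hunif⟩ := Metric.uniformContinuousOn_iff_le.1
    ((isCompact_closedBall (0 : En n) (2 * R)).uniformContinuousOn_of_continuous
      ((continuousOn_gradient hV.1 isOpen_ball).mono hsub)) (κ / 4) (by positivity)
  filter_upwards [Ioo_mem_nhdsGT (lt_min hδ hR)] with s ⟨hs, hsmin⟩
  have hsR : s ≤ R := hsmin.le.trans (min_le_right _ _)
  refine ⟨hV, hVL, he, hs, hsR, fun x hx y hy => ?_⟩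
  rw [← dist_eq_norm]
  refine hunif y ?_ x (closedBall_subset_closedBall (by linarith) hx)
    ((mem_closedBall.1 hy).trans (hsmin.le.trans (min_le_left _ _)))
  exact closedBall_subset_closedBall' (by linarith [mem_closedBall.1 hx]) hy

theorem eventually_div_mul_rpow_le (hn : n ≠ 0) {B C ε : ℝ} (hC : 0 ≤ C) (hε : 0 < ε) :
    ∀ᶠ R : ℝ in atTop, B / R * (C * (R ^ n / R)) ^ (n : ℝ)⁻¹ ≤ ε := by
  have hlim : Tendsto (fun R : ℝ => B * C ^ (n : ℝ)⁻¹ * R ^ (-(n : ℝ)⁻¹)) atTop (𝓝 0) := by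
    simpa only [mul_zero] using
      (tendsto_rpow_neg_atTop (by positivity : 0 < (n : ℝ)⁻¹)).const_mul (B * C ^ (n : ℝ)⁻¹)
  filter_upwards [hlim.eventually_le_const hε, eventually_gt_atTop 0] with R hRε hR
  refine le_of_eq_of_le ?_ hRε
  rw [Real.mul_rpow hC (by positivity), Real.div_rpow (by positivity) hR.le,
    Real.pow_rpow_inv_natCast hR.le hn, Real.rpow_neg hR.le]
  field_simp

theorem exists_radius_norm_gradient_zero_le (N : MinkowskiNorm n) (hn : 2 ≤ n) (hp : 1 < p) (K : ℝ)
    (hL : 0 < L) (hκ : 0 < κ) :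
    ∃ R : ℝ, 0 < R ∧ ∀ V : En n → ℝ, IsPHarmonicOn N p (ball 0 (3 * R)) V →
      (∀ x ∈ ball (0 : En n) (3 * R), |V x| ≤ K) →
      (∀ x ∈ ball (0 : En n) (3 * R), ‖gradient V x‖ ≤ L) → ‖gradient V 0‖ ≤ 2 * κ := by
  obtain ⟨A, μ, hA, hpair⟩ := IsShortStep.exists_isDeGiorgiPair N hp hL hκ
  obtain ⟨C, hC, hdeGiorgi⟩ := IsDeGiorgiPair.exists_le_of_volume_rpow_le hn
  obtain ⟨C', hvol⟩ := exists_volume_le_norm_gradient_le N hp (half_pos hκ) K L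
  obtain ⟨R, hsmall, hR⟩ := ((eventually_div_mul_rpow_le (n := n) (by lia) (B := C * A * L)
    (le_max_right C' 0) (sq_pos_of_pos hκ)).and (eventually_gt_atTop 0)).exists
  refine ⟨R, hR, fun V hV hVK hVL => norm_le_of_forall_inner_le (by positivity) fun e he => ?_⟩
  have h0 : (0 : En n) ∈ ball 0 (2 * R) := mem_ball_self (by positivity)
  refine inner_gradient_le_of_eventually_slope_le
    (hV.differentiableAt isOpen_ball (mem_ball_self (by positivity))) ?_
  filter_upwards [hV.eventually_isShortStep hR hκ hVL he] with s h
  set S := ball (0 : En n) (2 * R) ∩ {x | 0 < quotientBarrier V e s κ (L / R ^ 2) x}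
  have hS : S ⊆ closedBall 0 R ∩ {x | κ / 2 ≤ ‖gradient V x‖} := fun x hx =>
    ⟨h.mem_closedBall_of_pos hR hL.le hκ hx.1 hx.2, h.half_le_norm_gradient hR hL.le hκ hx.1 hx.2⟩
  have hSvol : volume.real S ≤ max C' 0 * (R ^ n / R) := calc
    volume.real S ≤ volume.real (closedBall 0 R ∩ {x | κ / 2 ≤ ‖gradient V x‖}) :=
      measureReal_mono hS
        ((measure_mono inter_subset_left).trans_lt measure_closedBall_lt_top).ne
    _ ≤ C' * (R ^ n / R) := hvol R hR V hV hVK hVL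
    _ ≤ max C' 0 * (R ^ n / R) := by gcongr; exact le_max_left _ _
  have hle := hdeGiorgi (hpair hR h) hL.le hκ ?_ 0 h0
  · linarith [quotientBarrier_zero V e s κ (L / R ^ 2)]
  · calc C * (A / R) * L * volume.real S ^ (n : ℝ)⁻¹
        ≤ C * (A / R) * L * (max C' 0 * (R ^ n / R)) ^ (n : ℝ)⁻¹ := by gcongr
      _ = C * A * L / R * (max C' 0 * (R ^ n / R)) ^ (n : ℝ)⁻¹ := by ring
      _ ≤ κ ^ 2 := hsmall

end DifferenceQuotient

section Asymptotics

variable {n : ℕ} {N : MinkowskiNorm n} {p R κ : ℝ} {v : En n → ℝ}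

namespace IsDecayingPHarmonic

theorem eventually_norm_gradient_le (hv : IsDecayingPHarmonic N p R v) (hp : 1 < p) (hpn : p < n)
    (hR : 0 ≤ R) (hκ : 0 < κ) :
    ∀ᶠ x in cocompact (En n), ‖gradient v x‖ ≤ 2 * κ * v x := by
  have hn : 2 ≤ n := by exact_mod_cast hp.trans hpn
  have : Nontrivial (En n) := Module.nontrivial_of_finrank_pos (R := ℝ) (by simp; lia)
  obtain ⟨C, hC, hgrad⟩ := hv.exists_norm_gradient_le hp
  obtain ⟨K, hK, hharnack⟩ := hv.exists_harnack hp hpn hR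
  obtain ⟨r, hr, hlocal⟩ := exists_radius_norm_gradient_zero_le N hn hp K (mul_pos hC hK) hκ
  filter_upwards [(tendsto_norm_cocompact_atTop (E := En n)).eventually_ge_atTop
    (6 * r + 2 * (R + 2))] with x hx
  have hvx : 0 < v x := hv.pos x (by linarith)
  have hfar : ∀ y ∈ ball (0 : En n) (3 * r), ‖x‖ / 2 ≤ ‖y + x‖ ∧ R + 2 ≤ ‖y + x‖ := fun y hy => by
    have htriangle := norm_sub_le (y + x) y
    rw [add_sub_cancel_left] at htriangle
    constructor <;> linarith [mem_ball_zero_iff.1 hy]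
  have hle : ∀ y ∈ ball (0 : En n) (3 * r), v (y + x) ≤ K * v x := fun y hy =>
    hharnack x (y + x) (by linarith) (by linarith [(hfar y hy).2]) (hfar y hy).1
  have hscaled : ∀ y, gradient (fun z => (v x)⁻¹ * v (z + x)) y = (v x)⁻¹ • gradient v (y + x) :=
    fun y => by rw [gradient_const_mul (fun z => v (z + x)), gradient_comp_add_right]
  have hzero := hlocal (fun y => (v x)⁻¹ * v (y + x))
    (((hv.isPHarmonicOn.comp_add_right x).const_mul (inv_pos.2 hvx)).mono fun y hy =>
      mem_compl_closedBall_zero_iff.2 (by linarith [(hfar y hy).2]))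
    (fun y hy => by
      have hvy : 0 < v (y + x) := hv.pos _ (by linarith [(hfar y hy).2])
      rw [abs_of_pos (by positivity), inv_mul_le_iff₀ hvx, mul_comm]
      exact hle y hy)
    (fun y hy => by
      rw [hscaled, norm_smul, norm_inv, Real.norm_of_nonneg hvx.le, inv_mul_le_iff₀ hvx]
      calc ‖gradient v (y + x)‖ ≤ C * v (y + x) := hgrad _ (hfar y hy).2
        _ ≤ C * (K * v x) := by gcongr; exact hle y hy
        _ = v x * (C * K) := by ring)
  rwa [hscaled, zero_add, norm_smul, norm_inv, Real.norm_of_nonneg hvx.le, inv_mul_le_iff₀ hvx,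
    mul_comm] at hzero

theorem tendsto_apply_gradient_div (hv : IsDecayingPHarmonic N p R v) (hp : 1 < p) (hpn : p < n)
    (hR : 0 ≤ R) : Tendsto (fun x => N.F (gradient v x) / v x) (cocompact (En n)) (𝓝 0) := by
  obtain ⟨_, c, _, hc, hN⟩ := N.exists_norm_equiv
  refine Metric.tendsto_nhds.2 fun ε hε => ?_
  filter_upwards [hv.eventually_norm_gradient_le hp hpn hR (κ := ε / (4 * c)) (by positivity),
    (tendsto_norm_cocompact_atTop (E := En n)).eventually_gt_atTop R] with x hx hxR
  have hvx : 0 < v x := hv.pos x hxR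
  rw [dist_zero_right, Real.norm_of_nonneg (div_nonneg (N.nonneg _) hvx.le), div_lt_iff₀ hvx]
  calc N.F (gradient v x) ≤ c * ‖gradient v x‖ := (hN _).2
    _ ≤ c * (2 * (ε / (4 * c)) * v x) := by gcongr
    _ = ε / 2 * v x := by
      field_simp
      ring
    _ < ε * v x := by gcongr; linarith

end IsDecayingPHarmonic

end Asymptotics

theorem statement7_general {n : ℕ} (N : MinkowskiNorm n) {Ω : Set (En n)} (hΩ : IsOpen Ω)
    (hbd : Bornology.IsBounded Ωᶜ) {p : ℝ} (hp : 1 < p) (hpn : p < n) {v : En n → ℝ}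
    (hpos : ∀ x ∈ Ω, 0 < v x) (hC1 : ContDiffOn ℝ 1 v Ω) (hsol : IsWeakPHarmonic N Ω p v)
    (hlim : Tendsto v (cocompact (En n)) (𝓝 0)) :
    Tendsto (fun x => N.F (gradient v x) / v x) (cocompact (En n)) (𝓝 0) := by
  obtain ⟨r, hr, hball⟩ := hbd.subset_closedBall_lt 0 0
  have hsub : (closedBall 0 r)ᶜ ⊆ Ω := compl_subset_comm.1 hball
  have hv : IsDecayingPHarmonic N p r v :=
    { isPHarmonicOn := (isPHarmonicOn_of_isWeakPHarmonic hp hΩ hC1 hsol).mono hsub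
      pos := fun x hx => hpos x (hsub (mem_compl_closedBall_zero_iff.2 hx))
      tendsto := hlim }
  exact hv.tendsto_apply_gradient_div hp hpn hr.le

/-- For the anisotropic `p`-capacitary potential `v_p`,
`F(∇v_p)/v_p → 0` at infinity. -/
theorem statement7 (n : ℕ) (N : MinkowskiNorm n)
    (Ω : Set (En n)) (hΩ : IsOpen Ω) (hsb : HasSmoothBoundary Ω)
    (hbd : Bornology.IsBounded Ωᶜ)
    (p : ℝ) (hp1 : 1 < p) (hpn : p < n)
    (v : En n → ℝ) (hpos : ∀ x ∈ closure Ω, 0 < v x)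
    (hC1 : ContDiffOn ℝ 1 v (closure Ω))
    (hsol : IsWeakPHarmonic N Ω p v)
    (hbc : ∀ x ∈ frontier Ω, v x = 1)
    (hlim : Tendsto v (cocompact (En n)) (𝓝 0)) :
    Tendsto (fun x => N.F (gradient v x) / v x) (cocompact (En n)) (𝓝 0) :=
  statement7_general N hΩ hbd hp1 hpn (fun x hx => hpos x (subset_closure hx))
    (hC1.mono subset_closure) hsol hlim
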